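/- Assume the Riemann Hypothesis. There exists an absolute constant C > 0 such that for all real r, x, c₁ with r > 1, 0 < c₁, x^{c₁} ≥ 2657, and c₁ ≤ 1/2 − ln r/(2·ln x), the following holds: setting m = ⌈(1 − 2c₁)·ln x / ln r⌉, there exists ã ∈ [1/(4(1−c₁)²), 1/(4c₁²)] with |N^{MAX}_{r,c₁}(x) − ã·(4x/ln²x)·((1 − 2c₁)·(1 − 1/r)·ln x − 1 + (ln r + 1)/r)| ≤ C·(m+1)·c₁^{−1}·x^{1 − c₁/2}, where N^{MAX}_{r,c₁}(x) = #{(p,q) : p, q prime, x^{c₁} < p ≤ x^{1−c₁}, x^{c₁} < q ≤ x^{1−c₁}, and x/r < p·q ≤ x}. -/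

import Mathlib

/-- Prime-pair count of the maximal `[c₁, 1−c₁]`-balanced notion with tolerance `r`:
ordered pairs of primes `(p,q)` with `x^{c₁} < p, q ≤ x^{1−c₁}` and `x/r < p·q ≤ x`. -/
noncomputable def NMAX (r c₁ x : ℝ) : ℕ :=
  Nat.card {pq : ℕ × ℕ // pq.1.Prime ∧ pq.2.Prime ∧
    x ^ c₁ < (pq.1 : ℝ) ∧ (pq.1 : ℝ) ≤ x ^ (1 - c₁) ∧
    x ^ c₁ < (pq.2 : ℝ) ∧ (pq.2 : ℝ) ≤ x ^ (1 - c₁) ∧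
    x / r < (pq.1 : ℝ) * (pq.2 : ℝ) ∧ (pq.1 : ℝ) * (pq.2 : ℝ) ≤ x}

section
open Complex MeasureTheory Set Filter Topology

noncomputable def hFr (t : ℝ) : ℂ := (Ioi (1:ℝ)).indicator (fun t => ((Int.fract t : ℝ) : ℂ)) t

lemma hFr_norm_le (t : ℝ) : ‖hFr t‖ ≤ 1 := by
  unfold hFr
  by_cases h : t ∈ Ioi (1:ℝ)
  · rw [indicator_of_mem h, Complex.norm_real, Real.norm_eq_abs, abs_of_nonneg (Int.fract_nonneg _)]
    exact (Int.fract_lt_one _).le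
  · rw [indicator_of_notMem h]; simp

lemma hFr_meas : Measurable hFr := by
  unfold hFr
  exact (Complex.measurable_ofReal.comp measurable_fract).indicator measurableSet_Ioi

lemma hFr_locInt : LocallyIntegrableOn hFr (Ioi 0) := by
  have : LocallyIntegrable hFr := by
    have h1 : LocallyIntegrable (fun _ : ℝ => (1:ℝ)) := locallyIntegrable_const _
    exact h1.mono hFr_meas.aestronglyMeasurable (Eventually.of_forall fun t => by
      simpa using hFr_norm_le t)
  exact this.locallyIntegrableOn _

lemma hFr_top : hFr =O[atTop] (fun t : ℝ => t ^ (-(0:ℝ))) := by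
  refine Asymptotics.IsBigO.of_bound 1 (Eventually.of_forall fun t => ?_)
  simpa using hFr_norm_le t

lemma ind_bot (f : ℝ → ℂ) (b : ℝ) (hf : ∀ t ≤ 1, f t = 0) :
    f =O[𝓝[>] 0] (fun t : ℝ => t ^ (-b)) := by
  refine Asymptotics.IsBigO.of_bound 1 ?_
  have : Iio (1:ℝ) ∈ 𝓝[>] (0:ℝ) := mem_nhdsWithin_of_mem_nhds (Iio_mem_nhds one_pos)
  filter_upwards [this, self_mem_nhdsWithin] with t ht ht0
  rw [hf t (le_of_lt ht)]
  simp

lemma hFr_zero (t : ℝ) (ht : t ≤ 1) : hFr t = 0 := by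
  unfold hFr; rw [indicator_of_notMem]; simpa using ht

noncomputable def Hz (s : ℂ) : ℂ := mellin hFr (-s)

lemma Hz_diff {s : ℂ} (hs : 0 < s.re) : DifferentiableAt ℂ Hz s := by
  have := mellin_differentiableAt_of_isBigO_rpow (s := -s) hFr_locInt hFr_top (by simpa using hs)
    (ind_bot hFr ((-s).re - 1) hFr_zero) (by simp)
  exact this.comp s differentiable_neg.differentiableAt

lemma Hz_conv {s : ℂ} (hs : 0 < s.re) : MellinConvergent hFr (-s) :=
  mellinConvergent_of_isBigO_rpow (s := -s) hFr_locInt hFr_top (by simpa using hs)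
    (ind_bot hFr ((-s).re - 1) hFr_zero) (by simp)

lemma Hz_eq (s : ℂ) : Hz s = ∫ t in Ioi (1:ℝ), ((Int.fract t : ℝ) : ℂ) * (t:ℂ) ^ (-(s+1)) := by
  unfold Hz mellin
  have h1 : Ioi (1:ℝ) ⊆ Ioi 0 := Ioi_subset_Ioi zero_le_one
  rw [setIntegral_eq_of_subset_of_forall_sdiff_eq_zero measurableSet_Ioi h1]
  · refine setIntegral_congr_fun measurableSet_Ioi fun t ht => ?_
    simp only [hFr, indicator_of_mem ht, smul_eq_mul]
    rw [mul_comm]; congr 2; ring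
  · intro t ht
    rw [hFr_zero t (by simpa using ht.2)]; simp

lemma Hz_norm {s : ℂ} (hs : 0 < s.re) : ‖Hz s‖ ≤ 1 / s.re := by
  rw [Hz_eq]
  have hi : IntegrableOn (fun t : ℝ => t ^ (-(s.re+1))) (Ioi 1) :=
    integrableOn_Ioi_rpow_of_lt (by linarith) one_pos
  calc _ ≤ ∫ t in Ioi (1:ℝ), t ^ (-(s.re+1)) := by
        refine norm_integral_le_of_norm_le hi ?_
        refine (ae_restrict_iff' measurableSet_Ioi).2 (Eventually.of_forall fun t ht => ?_)
        have ht0 : 0 < t := lt_trans one_pos ht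
        rw [norm_mul, Complex.norm_cpow_eq_rpow_re_of_pos ht0, Complex.norm_real, Real.norm_eq_abs,
          abs_of_nonneg (Int.fract_nonneg _)]
        simp only [neg_re, add_re, one_re]
        have := (Int.fract_lt_one t).le
        have h2 : 0 ≤ t ^ (-(s.re+1)) := by positivity
        nlinarith
    _ = 1 / s.re := by
        rw [integral_Ioi_rpow_of_lt (by linarith) one_pos]
        simp
        

noncomputable def Fz (s : ℂ) : ℂ := s - s * (s - 1) * Hz s

lemma Fz_diff {s : ℂ} (hs : 0 < s.re) : DifferentiableAt ℂ Fz s := by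
  unfold Fz
  have := Hz_diff hs
  fun_prop

lemma Fz_one : Fz 1 = 1 := by simp [Fz]

lemma Fz_eq_of_one_lt {s : ℂ} (hs : 1 < s.re) : Fz s = (s - 1) * riemannZeta s := by
  have hsum : (fun n : ℕ ↦ ∑ k ∈ Finset.Icc 1 n, ‖(1 : ℕ → ℂ) k‖) =O[atTop] fun n ↦ (n : ℝ) ^ (1:ℝ) := by
    refine Asymptotics.IsBigO.of_bound 1 (Eventually.of_forall fun t => ?_)
    simp
  have h := LSeries_eq_mul_integral' (1 : ℕ → ℂ) zero_le_one hs hsum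
  rw [LSeries_one_eq_riemannZeta hs] at h
  have hs1 : s - 1 ≠ 0 := by
    intro h; have : s = 1 := by linear_combination h
    rw [this] at hs; simp at hs
  have hi1 : IntegrableOn (fun t : ℝ => (t:ℂ) ^ (-s)) (Ioi 1) :=
    integrableOn_Ioi_cpow_of_lt (by simpa using hs) one_pos
  have hi2 : IntegrableOn (fun t : ℝ => ((Int.fract t : ℝ) : ℂ) * (t:ℂ) ^ (-(s+1))) (Ioi 1) := by
    have := (Hz_conv (s := s) (by linarith)).mono_set (Ioi_subset_Ioi (zero_le_one (α := ℝ)))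
    refine this.congr_fun (fun t ht => ?_) measurableSet_Ioi
    simp only [hFr, indicator_of_mem ht, smul_eq_mul]
    rw [mul_comm]; congr 2; ring
  have e : ∫ t in Ioi (1 : ℝ), (∑ k ∈ Finset.Icc 1 ⌊t⌋₊, (1 : ℕ → ℂ) k) * (t:ℂ) ^ (-(s + 1))
      = (∫ t in Ioi (1:ℝ), (t:ℂ) ^ (-s)) - Hz s := by
    rw [Hz_eq, ← integral_sub hi1 hi2]
    refine setIntegral_congr_fun measurableSet_Ioi fun t ht => ?_
    have ht0 : (0:ℝ) < t := lt_trans one_pos ht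
    have ht' : (t:ℂ) ≠ 0 := by exact_mod_cast ht0.ne'
    have e1 : (t:ℂ) ^ (-s) = t * (t:ℂ) ^ (-(s+1)) := by
      rw [show -s = 1 + -(s+1) by ring, cpow_add _ _ ht', cpow_one]
    have e2 : ((⌊t⌋₊ : ℕ) : ℂ) = t - ((Int.fract t : ℝ) : ℂ) := by
      have : ((⌊t⌋₊ : ℕ) : ℝ) = t - Int.fract t := by
        rw [natCast_floor_eq_intCast_floor ht0.le]; rw [Int.self_sub_fract]
      exact_mod_cast congrArg (fun x : ℝ => (x : ℂ)) this
    simp only [e1, Pi.one_apply, Finset.sum_const, Nat.card_Icc, add_tsub_cancel_right, nsmul_eq_mul, mul_one, e2]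
    ring
  rw [e, integral_Ioi_cpow_of_lt (by simpa using hs) one_pos] at h
  rw [h, Fz]
  have : -s + 1 ≠ 0 := by intro h; apply hs1; linear_combination -h
  simp
  field_simp
  ring

lemma Fz_eq {s : ℂ} (hs : 0 < s.re) (h1 : s ≠ 1) : Fz s = (s - 1) * riemannZeta s := by
  have hU : IsOpen {z : ℂ | 0 < z.re} := isOpen_lt continuous_const continuous_re
  set g : ℂ → ℂ := Function.update (fun s => (s - 1) * riemannZeta s) 1 1 with hg
  have hgd : DifferentiableOn ℂ g {z : ℂ | 0 < z.re} := by
    refine ((Complex.differentiableOn_compl_singleton_and_continuousAt_iff (c := 1)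
      (hU.mem_nhds (by simp))).1 ⟨?_, ?_⟩)
    · intro z hz
      have hz1 : z ≠ 1 := hz.2
      have : DifferentiableAt ℂ (fun s => (s - 1) * riemannZeta s) z :=
        (by fun_prop : DifferentiableAt ℂ (fun s : ℂ => s - 1) z).mul (differentiableAt_riemannZeta hz1)
      refine (this.congr_of_eventuallyEq ?_).differentiableWithinAt
      filter_upwards [isOpen_ne.mem_nhds hz1] with w hw
      rw [hg, Function.update_of_ne hw]
    · rw [hg, continuousAt_update_same]
      exact riemannZeta_residue_one
  have hF : DifferentiableOn ℂ Fz {z : ℂ | 0 < z.re} :=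
    fun z hz => (Fz_diff hz).differentiableWithinAt
  have := (hF.analyticOnNhd hU).eqOn_of_preconnected_of_eventuallyEq (hgd.analyticOnNhd hU)
    (convex_halfSpace_re_gt 0).isPreconnected (z₀ := 2) (by simp) (by
      have : {z : ℂ | 1 < z.re} ∈ 𝓝 (2:ℂ) := (isOpen_lt continuous_const continuous_re).mem_nhds (by simp)
      filter_upwards [this] with w hw
      have hw1 : w ≠ 1 := by rintro rfl; simp at hw
      rw [hg, Function.update_of_ne hw1, Fz_eq_of_one_lt hw])
  rw [this hs, hg, Function.update_of_ne h1]

lemma Fz_ne_zero (hRH : RiemannHypothesis) {s : ℂ} (hs : 1/2 < s.re) : Fz s ≠ 0 := by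
  by_cases h1 : s = 1
  · rw [h1, Fz_one]; exact one_ne_zero
  rw [Fz_eq (by linarith) h1]
  refine mul_ne_zero (sub_ne_zero.2 h1) fun h => ?_
  have := hRH s h (by
    rintro ⟨n, rfl⟩
    simp at hs
    have : (0:ℝ) ≤ n := n.cast_nonneg
    linarith) h1
  linarith

lemma Fz_norm {s : ℂ} (hs : 1/2 < s.re) : ‖Fz s‖ ≤ 4 * (1 + ‖s‖) ^ 2 := by
  have h := Hz_norm (s := s) (by linarith)
  have h2 : 1 / s.re ≤ 2 := by rw [div_le_iff₀ (by linarith)]; linarith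
  have h3 : ‖s - 1‖ ≤ ‖s‖ + 1 := by simpa using norm_sub_le s 1
  calc ‖Fz s‖ ≤ ‖s‖ + ‖s‖ * ‖s-1‖ * ‖Hz s‖ := by
        unfold Fz
        refine (norm_sub_le _ _).trans ?_
        rw [norm_mul, norm_mul]
    _ ≤ ‖s‖ + ‖s‖ * (‖s‖ + 1) * 2 := by gcongr; linarith
    _ ≤ _ := by nlinarith [norm_nonneg s]

end

section
open Complex MeasureTheory Set Filter Topology

lemma zeta_lower {c : ℂ} (hc : c.re = 2) : 1/3 ≤ ‖riemannZeta c‖ := by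
  have h1 : 1 < c.re := by rw [hc]; norm_num
  have hs : Summable (fun n : ℕ => 1 / ((n:ℂ) + 1) ^ c) := by
    have := (summable_nat_add_iff 1).2 (Complex.summable_one_div_nat_cpow.2 h1)
    simpa using this
  have hreal : HasSum (fun n : ℕ => 1 / ((n:ℝ) + 2) ^ 2) (Real.pi ^ 2 / 6 - 1) := by
    have := (hasSum_nat_add_iff' 2).2 hasSum_zeta_two
    simpa [Finset.sum_range_succ] using this
  have hn : ∀ n : ℕ, ‖1 / (((n + 1 : ℕ):ℂ) + 1) ^ c‖ = 1 / ((n:ℝ) + 2) ^ 2 := by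
    intro n
    rw [norm_div, norm_one]
    have : (((n + 1 : ℕ):ℂ) + 1) = (((n:ℝ) + 2 : ℝ) : ℂ) := by push_cast; ring
    rw [this, Complex.norm_cpow_eq_rpow_re_of_pos (by positivity), hc]
    norm_num
  have hz : riemannZeta c = 1 + ∑' n : ℕ, 1 / (((n + 1 : ℕ):ℂ) + 1) ^ c := by
    rw [zeta_eq_tsum_one_div_nat_add_one_cpow h1, hs.tsum_eq_zero_add]
    simp
  have hb : ‖∑' n : ℕ, 1 / (((n + 1 : ℕ):ℂ) + 1) ^ c‖ ≤ Real.pi ^ 2 / 6 - 1 := by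
    refine tsum_of_norm_bounded hreal fun n => (hn n).le
  have hpi : Real.pi ^ 2 / 6 - 1 ≤ 2/3 := by
    have h1 := Real.pi_lt_d2
    have h2 := Real.pi_pos
    nlinarith
  have : ‖(1:ℂ)‖ ≤ ‖riemannZeta c‖ + ‖∑' n : ℕ, 1 / (((n + 1 : ℕ):ℂ) + 1) ^ c‖ := by
    have : (1:ℂ) = riemannZeta c - ∑' n : ℕ, 1 / (((n + 1 : ℕ):ℂ) + 1) ^ c := by rw [hz]; ring
    calc ‖(1:ℂ)‖ = ‖riemannZeta c - ∑' n : ℕ, 1 / (((n + 1 : ℕ):ℂ) + 1) ^ c‖ := by rw [← this]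
      _ ≤ _ := norm_sub_le _ _
  rw [norm_one] at this
  linarith

lemma logDeriv_bound (hRH : RiemannHypothesis) : ∃ C : ℝ, 0 < C ∧ ∀ s : ℂ, 11/20 ≤ s.re → s.re ≤ 2 →
    ‖deriv Fz s / Fz s‖ ≤ C * (1 + |s.im|) ^ (1/16 : ℝ) := by
  refine ⟨147 * (32 * (300:ℝ) ^ (1/32 : ℝ)) / (1/50), by positivity, fun s hs1 hs2 => ?_⟩
  set t := s.im with ht
  set c : ℂ := ⟨2, t⟩ with hc
  obtain ⟨R, hR⟩ : ∃ R : ℝ, R = 149/100 := ⟨_, rfl⟩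
  set U := Metric.ball c R with hU
  have hre : ∀ z ∈ U, 1/2 < z.re := by
    intro z hz
    have h1 : ‖z - c‖ < R := by simpa [hU, dist_eq_norm] using hz
    have h2 := abs_le.1 (Complex.abs_re_le_norm (z - c))
    have : (z - c).re = z.re - 2 := by simp [hc]
    rw [this] at h2
    linarith [h2.1]
  have hUo : IsOpen U := Metric.isOpen_ball
  have hFd : DifferentiableOn ℂ Fz U := fun z hz => (Fz_diff (by linarith [hre z hz])).differentiableWithinAt
  have hF0 : ∀ z ∈ U, Fz z ≠ 0 := fun z hz => Fz_ne_zero hRH (hre z hz)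
  have hgd : DifferentiableOn ℂ (fun z => deriv Fz z / Fz z) U := (hFd.deriv hUo).div hFd hF0
  have hcU : c ∈ U := Metric.mem_ball_self (by norm_num [hR])
  obtain ⟨P, hPc, hP⟩ := (hgd.isExactOn_ball).with_val_at c 0
  have hconst : ∀ z ∈ U, Fz z * exp (-P z) = Fz c := by
    intro z hz
    have hd : ∀ w ∈ U, HasDerivWithinAt (fun z => Fz z * exp (-P z)) 0 U w := by
      intro w hw
      have h1 : HasDerivAt Fz (deriv Fz w) w := (Fz_diff (by linarith [hre w hw])).hasDerivAt
      have h2 := h1.mul ((hP w hw).neg.cexp)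
      refine HasDerivAt.hasDerivWithinAt ?_
      have := hF0 w hw
      have e0 : deriv Fz w * cexp ((-P) w) + Fz w * (cexp ((-P) w) * -(deriv Fz w / Fz w)) = 0 := by
        field_simp
        ring
      rw [e0] at h2
      exact h2
    have := (convex_ball c R).norm_image_sub_le_of_norm_hasDerivWithin_le (C := 0) hd (by simp) hcU hz
    simp only [zero_mul, norm_le_zero_iff, hPc, neg_zero, exp_zero, mul_one] at this
    exact sub_eq_zero.1 this
  set M : ℝ := 32 * (300:ℝ) ^ (1/32 : ℝ) * (1 + |t|) ^ (1/16 : ℝ) with hM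
  have hMpos : 0 < M := by positivity
  have hFc : 1/3 ≤ ‖Fz c‖ := by
    have hc1 : c ≠ 1 := by intro h; have := congrArg Complex.re h; norm_num [hc] at this
    rw [Fz_eq (by norm_num [hc]) hc1, norm_mul]
    have h1 : 1 ≤ ‖c - 1‖ := by
      have := Complex.abs_re_le_norm (c - 1)
      have e : (c - 1).re = 1 := by norm_num [hc]
      rw [e] at this; simpa using this
    have h2 := zeta_lower (c := c) rfl
    nlinarith
  have hnc : ‖c‖ ≤ 2 + |t| := by
    have := Complex.norm_le_abs_re_add_abs_im c
    simpa [hc] using this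
  have hPre : ∀ z ∈ U, (P z).re ≤ M := by
    intro z hz
    have h1 := hconst z hz
    have h2 : ‖Fz z‖ * Real.exp (-(P z).re) = ‖Fz c‖ := by
      rw [← h1, norm_mul, Complex.norm_exp]; simp
    have h3 : Real.exp (P z).re ≤ 300 * (1 + |t|) ^ 2 := by
      have h4 := Fz_norm (hre z hz)
      have h5 : ‖z‖ ≤ 4 + |t| := by
        have h1 : ‖z - c‖ < R := by simpa [hU, dist_eq_norm] using hz
        have := norm_add_le (z - c) c
        simp only [sub_add_cancel] at this
        linarith
      have h6 : ‖Fz z‖ ≤ 100 * (1 + |t|) ^ 2 := by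
        have : (1 + ‖z‖)^2 ≤ (5 * (1 + |t|))^2 := by
          gcongr; linarith [abs_nonneg t]
        nlinarith
      have h7 : Real.exp (-(P z).re) * Real.exp (P z).re = 1 := by rw [← Real.exp_add]; simp
      have h8 := Real.exp_pos (P z).re
      have h9 : ‖Fz z‖ = ‖Fz c‖ * Real.exp (P z).re := by
        rw [← h2, mul_assoc, h7, mul_one]
      nlinarith
    have h10 : (P z).re ≤ Real.log (300 * (1 + |t|) ^ 2) := by
      rw [Real.le_log_iff_exp_le (by positivity)]; exact h3
    refine h10.trans ((Real.log_le_rpow_div (by positivity) (by norm_num : (0:ℝ) < 1/32)).trans ?_)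
    rw [Real.mul_rpow (by norm_num) (by positivity), ← Real.rpow_natCast, ← Real.rpow_mul (by positivity)]
    rw [hM]
    norm_num
    apply le_of_eq; ring
  have hbc : ∀ z : ℂ, ‖z - c‖ ≤ 147/100 → ‖P z‖ ≤ 147 * M := by
    intro z hz
    have := borelCaratheodory_zero (f := fun w => P (c + w)) (M := M) (R := R) (z := z - c) hMpos ?_ ?_
      (by norm_num [hR]) (by simp [hR]; linarith) (by simpa using hPc)
    · simp only [add_sub_cancel] at this
      refine this.trans ?_
      rw [div_le_iff₀ (by linarith)]
      nlinarith
    · intro w hw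
      have : c + w ∈ U := by simpa [hU] using hw
      exact ((hP _ this).differentiableAt.comp w (by fun_prop)).differentiableWithinAt
    · intro w hw
      have : c + w ∈ U := by simpa [hU] using hw
      exact hPre _ this
  have hsc : ‖s - c‖ ≤ 145/100 := by
    have : s - c = ((s.re - 2 : ℝ) : ℂ) := by
      apply Complex.ext <;> simp [hc, ht]
    rw [this, Complex.norm_real, Real.norm_eq_abs, abs_le]
    constructor <;> linarith
  have hsU : s ∈ U := by
    simp only [hU, Metric.mem_ball, dist_eq_norm]; linarith
  have hder := Complex.norm_deriv_le_of_forall_mem_sphere_norm_le (c := s) (R := 1/50) (f := P) (C := 147 * M)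
    (by norm_num) ?_ ?_
  · rw [(hP s hsU).deriv] at hder
    refine hder.trans (le_of_eq ?_)
    rw [hM]; ring
  · refine (DifferentiableOn.diffContOnCl (fun z hz => ?_))
    rw [closure_ball _ (by norm_num)] at hz
    have h1 : ‖z - s‖ ≤ 1/50 := by simpa [dist_eq_norm] using hz
    have : z ∈ U := by
      have := norm_add_le (z - s) (s - c)
      simp only [sub_add_sub_cancel] at this
      simp only [hU, Metric.mem_ball, dist_eq_norm]; linarith
    exact (hP z this).differentiableAt.differentiableWithinAt
  · intro z hz
    have h1 : ‖z - s‖ = 1/50 := by simpa [dist_eq_norm] using hz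
    apply hbc
    have := norm_add_le (z - s) (s - c)
    simp only [sub_add_sub_cancel] at this
    linarith

end

section
open Complex MeasureTheory Set Filter Topology

lemma shift_contour {f : ℂ → ℂ} {a b B e : ℝ} (hab : a ≤ b) (he : 1 < e)
    (hf : ∀ s : ℂ, a ≤ s.re → s.re ≤ b → DifferentiableAt ℂ f s)
    (hB : ∀ s : ℂ, a ≤ s.re → s.re ≤ b → ‖f s‖ ≤ B * (1 + |s.im|) ^ (-e)) :
    (∫ y : ℝ, f (a + y * I)) = ∫ y : ℝ, f (b + y * I) := by
  have hint : ∀ c : ℝ, a ≤ c → c ≤ b → Integrable (fun y : ℝ => f (c + y * I)) := by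
    intro c h1 h2
    have h0 : Integrable (fun y : ℝ => B * (1 + ‖y‖) ^ (-e)) :=
      (integrable_one_add_norm (by simpa using he)).const_mul B
    refine h0.mono' ?_ (Eventually.of_forall fun y => ?_)
    · refine Continuous.aestronglyMeasurable ?_
      rw [continuous_iff_continuousAt]
      intro y
      have : ContinuousAt f (c + y * I) := (hf _ (by simpa using h1) (by simpa using h2)).continuousAt
      exact ContinuousAt.comp (f := fun y : ℝ => (c : ℂ) + y * I) this (by fun_prop)
    · simpa using hB (c + y * I) (by simpa using h1) (by simpa using h2)
  have hrect : ∀ T : ℝ, (((∫ x : ℝ in a..b, f (x + (-T : ℝ) * I)) - ∫ x : ℝ in a..b, f (x + T * I)) +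
      I • ∫ y : ℝ in (-T)..T, f (b + y * I)) - I • ∫ y : ℝ in (-T)..T, f (a + y * I) = 0 := by
    intro T
    have := Complex.integral_boundary_rect_eq_zero_of_differentiableOn f ⟨a, -T⟩ ⟨b, T⟩ (by
      intro s hs
      rw [mem_reProdIm] at hs
      simp only [uIcc_of_le hab] at hs
      exact (hf s hs.1.1 hs.1.2).differentiableWithinAt)
    simpa using this
  have hhor : ∀ σ : ℝ, |σ| = 1 → Tendsto (fun T : ℝ => ∫ x : ℝ in a..b, f (x + (σ * T : ℝ) * I)) atTop (𝓝 0) := by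
    intro σ hσ
    have h1 : Tendsto (fun T : ℝ => B * (1 + T) ^ (-e) * |b - a|) atTop (𝓝 (B * 0 * |b - a|)) := by
      refine Tendsto.mul_const _ (Tendsto.const_mul _ ?_)
      exact (tendsto_rpow_neg_atTop (by linarith)).comp (tendsto_atTop_add_const_left _ _ tendsto_id)
    rw [mul_zero, zero_mul] at h1
    refine squeeze_zero_norm' ?_ h1
    filter_upwards [eventually_ge_atTop 0] with T hT
    refine intervalIntegral.norm_integral_le_of_norm_le_const fun x hx => ?_
    rw [uIoc_of_le hab] at hx
    have := hB (x + (σ * T : ℝ) * I) (by simpa using hx.1.le) (by simpa using hx.2)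
    simpa [abs_mul, hσ, abs_of_nonneg hT] using this
  have hlim : Tendsto (fun T : ℝ => (((∫ x : ℝ in a..b, f (x + (-T : ℝ) * I)) - ∫ x : ℝ in a..b, f (x + T * I)) +
      I • ∫ y : ℝ in (-T)..T, f (b + y * I)) - I • ∫ y : ℝ in (-T)..T, f (a + y * I)) atTop
      (𝓝 ((0 - 0 + I • ∫ y : ℝ, f (b + y * I)) - I • ∫ y : ℝ, f (a + y * I))) := by
    refine Tendsto.sub (Tendsto.add (Tendsto.sub ?_ ?_) (Tendsto.const_smul ?_ _)) (Tendsto.const_smul ?_ _)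
    · simpa using hhor (-1) (by simp)
    · simpa using hhor 1 (by simp)
    · exact intervalIntegral_tendsto_integral (hint b hab le_rfl) tendsto_neg_atTop_atBot tendsto_id
    · exact intervalIntegral_tendsto_integral (hint a le_rfl hab) tendsto_neg_atTop_atBot tendsto_id
  simp only [hrect] at hlim
  have := tendsto_nhds_unique hlim tendsto_const_nhds
  rw [sub_zero, zero_add, ← smul_sub, smul_eq_zero] at this
  rcases this with h | h
  · exact absurd h I_ne_zero
  · exact (sub_eq_zero.1 h).symm

noncomputable def Dl (u : ℝ) : ℝ := Chebyshev.psi u - u + 1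

lemma Dl_meas : Measurable Dl := by
  unfold Dl
  have := Chebyshev.psi_mono.measurable
  fun_prop

lemma Dl_bound {u : ℝ} (hu : 1 ≤ u) : |Dl u| ≤ 7 * u := by
  have h1 := Chebyshev.psi_nonneg u
  have h2 := Chebyshev.psi_le_const_mul_self (x := u) (by linarith)
  have h3 : Real.log 4 ≤ 2 := by
    rw [show (4:ℝ) = 2 ^ 2 by norm_num, Real.log_pow]
    have := Real.log_two_lt_d9
    push_cast; linarith
  unfold Dl
  rw [abs_le]; constructor <;> nlinarith

lemma Dl_intInt (a b : ℝ) : IntervalIntegrable Dl volume a b := by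
  unfold Dl
  exact ((Chebyshev.psi_mono.monotoneOn _).intervalIntegrable.sub (by simp)).add (by simp)

noncomputable def D1 (x : ℝ) : ℝ := ∫ v in (1:ℝ)..x, Dl v

lemma D1_cont : Continuous D1 := intervalIntegral.continuous_primitive (fun a b => Dl_intInt a b) 1

lemma D1_bound {x : ℝ} (hx : 1 ≤ x) : |D1 x| ≤ 7 * x ^ 2 := by
  have : ‖D1 x‖ ≤ 7 * x * |x - 1| := by
    refine intervalIntegral.norm_integral_le_of_norm_le_const fun v hv => ?_
    rw [uIoc_of_le hx] at hv
    have := Dl_bound hv.1.le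
    rw [Real.norm_eq_abs]
    linarith [hv.2]
  rw [Real.norm_eq_abs, abs_of_nonneg (by linarith : 0 ≤ x - 1)] at this
  nlinarith

noncomputable def Q0 (s : ℂ) : ℂ := -(deriv Fz s / Fz s)

lemma Dl_integrable {s : ℂ} (hs : 1 < s.re) :
    IntegrableOn (fun v : ℝ => (Dl v : ℂ) * (v:ℂ) ^ (-(s+1))) (Ioi 1) := by
  have h0 : IntegrableOn (fun v : ℝ => 7 * v ^ (-s.re)) (Ioi 1) :=
    (integrableOn_Ioi_rpow_of_lt (by linarith) one_pos).const_mul 7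
  refine h0.mono' ?_ ?_
  · refine (Measurable.mul (Complex.measurable_ofReal.comp Dl_meas) ?_).aestronglyMeasurable
    fun_prop
  · refine (ae_restrict_iff' measurableSet_Ioi).2 (Eventually.of_forall fun t ht => ?_)
    have ht0 : (0:ℝ) < t := lt_trans one_pos ht
    rw [norm_mul, Complex.norm_cpow_eq_rpow_re_of_pos ht0, Complex.norm_real, Real.norm_eq_abs]
    have h1 := Dl_bound (le_of_lt ht)
    have h2 : t ^ (-s.re) = t * t ^ (-(s+1)).re := by
      rw [show -s.re = 1 + (-(s+1)).re by simp, Real.rpow_add ht0, Real.rpow_one]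
    rw [h2]
    have h3 : 0 ≤ t ^ (-(s+1)).re := by positivity
    nlinarith

lemma Dl_mellin {s : ℂ} (hs : 1 < s.re) :
    ∫ v in Ioi (1:ℝ), (Dl v : ℂ) * (v:ℂ) ^ (-(s+1)) = Q0 s / s := by
  have hs0 : s ≠ 0 := by rintro rfl; simp at hs; linarith
  have hs1 : s ≠ 1 := by rintro rfl; simp at hs
  have hs1' : s - 1 ≠ 0 := sub_ne_zero.2 hs1
  have hz : riemannZeta s ≠ 0 := riemannZeta_ne_zero_of_one_lt_re hs
  have hQ : Q0 s = - deriv riemannZeta s / riemannZeta s - 1 / (s - 1) := by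
    have he : Fz =ᶠ[𝓝 s] fun z => (z - 1) * riemannZeta z := by
      have : {z : ℂ | 1 < z.re} ∈ 𝓝 s := (isOpen_lt continuous_const continuous_re).mem_nhds hs
      filter_upwards [this] with w hw using Fz_eq_of_one_lt hw
    have hd : HasDerivAt (fun z => (z - 1) * riemannZeta z) (1 * riemannZeta s + (s - 1) * deriv riemannZeta s) s :=
      ((hasDerivAt_id s).sub_const 1).mul (differentiableAt_riemannZeta hs1).hasDerivAt
    rw [Q0, he.deriv_eq, hd.deriv, Fz_eq_of_one_lt hs]
    field_simp
    ring
  have hO : (fun n ↦ ∑ k ∈ Finset.Icc 1 n, ArithmeticFunction.vonMangoldt k) =O[atTop] fun n ↦ (n : ℝ) ^ (1:ℝ) := by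
    refine Asymptotics.IsBigO.of_bound (Real.log 4 + 4) (Eventually.of_forall fun n => ?_)
    have h := Chebyshev.psi_le_const_mul_self (x := n) n.cast_nonneg
    have h2 := Chebyshev.psi_nonneg n
    rw [Chebyshev.psi, Nat.floor_natCast] at h h2
    have e : Finset.Icc 1 n = Finset.Ioc 0 n := by ext; simp [Nat.succ_le_iff]
    rw [e, Real.norm_eq_abs, abs_of_nonneg h2]
    simpa using h
  have h := LSeries_eq_mul_integral_of_nonneg (fun n => ArithmeticFunction.vonMangoldt n) zero_le_one hs hO
    (fun n => ArithmeticFunction.vonMangoldt_nonneg)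
  rw [ArithmeticFunction.LSeries_vonMangoldt_eq_deriv_riemannZeta_div hs] at h
  have hi1 : IntegrableOn (fun t : ℝ => (t:ℂ) ^ (-s)) (Ioi 1) :=
    integrableOn_Ioi_cpow_of_lt (by simpa using hs) one_pos
  have hi2 : IntegrableOn (fun t : ℝ => (t:ℂ) ^ (-(s+1))) (Ioi 1) :=
    integrableOn_Ioi_cpow_of_lt (by simp; linarith) one_pos
  have e : ∫ t in Ioi (1 : ℝ), (∑ k ∈ Finset.Icc 1 ⌊t⌋₊, (ArithmeticFunction.vonMangoldt k : ℂ)) * (t:ℂ) ^ (-(s + 1))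
      = (∫ v in Ioi (1:ℝ), (Dl v : ℂ) * (v:ℂ) ^ (-(s+1))) + ((∫ t in Ioi (1:ℝ), (t:ℂ) ^ (-s)) - ∫ t in Ioi (1:ℝ), (t:ℂ) ^ (-(s+1))) := by
    have hi12 : IntegrableOn (fun t : ℝ => (t:ℂ) ^ (-s) - (t:ℂ) ^ (-(s+1))) (Ioi 1) := hi1.sub hi2
    rw [← integral_sub hi1 hi2, ← integral_add (Dl_integrable hs) hi12]
    refine setIntegral_congr_fun measurableSet_Ioi fun t ht => ?_
    have ht0 : (0:ℝ) < t := lt_trans one_pos ht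
    have ht' : (t:ℂ) ≠ 0 := by exact_mod_cast ht0.ne'
    have e1 : (t:ℂ) ^ (-s) = t * (t:ℂ) ^ (-(s+1)) := by
      rw [show -s = 1 + -(s+1) by ring, cpow_add _ _ ht', cpow_one]
    have e3 : Finset.Icc 1 ⌊t⌋₊ = Finset.Ioc 0 ⌊t⌋₊ := by ext; simp [Nat.succ_le_iff]
    have e2 : (∑ k ∈ Finset.Icc 1 ⌊t⌋₊, (ArithmeticFunction.vonMangoldt k : ℂ)) = (Dl t : ℂ) + t - 1 := by
      rw [e3, Dl, Chebyshev.psi]; push_cast; ring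
    simp only [e1, e2]
    ring
  rw [e, integral_Ioi_cpow_of_lt (by simpa using hs) one_pos, integral_Ioi_cpow_of_lt (by simp; linarith) one_pos] at h
  rw [hQ, h]
  have : -s + 1 ≠ 0 := by intro h; apply hs1'; linear_combination -h
  have h3 : -(s + 1) + 1 ≠ 0 := by intro h; apply hs0; linear_combination -h
  simp
  field_simp
  ring

lemma D1_fubini {s : ℂ} (hs : 1 < s.re) :
    ∫ v in Ioi (1:ℝ), (Dl v : ℂ) * (v:ℂ) ^ (-(s+1)) =
     (s + 1) * ∫ u in Ioi (1:ℝ), (D1 u : ℂ) * (u:ℂ) ^ (-(s+2)) := by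
  have hs1 : s + 1 ≠ 0 := by
    intro h; have := congrArg Complex.re h; simp at this; linarith
  set μ := volume.restrict (Ioi (1:ℝ)) with hμ
  set K : ℝ → ℝ → ℂ := fun v u => (Ioi v).indicator (fun u : ℝ => (Dl v : ℂ) * (u:ℂ) ^ (-(s+2))) u with hK
  have hinner : ∀ v : ℝ, 1 < v → ∀ g : ℝ → ℂ,
      ∫ u, (Ioi v).indicator g u ∂μ = ∫ u in Ioi v, g u := by
    intro v hv g
    rw [hμ, integral_indicator measurableSet_Ioi, Measure.restrict_restrict measurableSet_Ioi]
    congr 2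
    rw [Ioi_inter_Ioi]; simp [hv.le]
  have hm : Measurable (Function.uncurry K) := by
    have : Function.uncurry K = {p : ℝ × ℝ | p.1 < p.2}.indicator (fun p => (Dl p.1 : ℂ) * (p.2:ℂ) ^ (-(s+2))) := by
      ext ⟨v, u⟩
      simp [Function.uncurry, hK, indicator]
    rw [this]
    refine Measurable.indicator ?_ (measurableSet_lt measurable_fst measurable_snd)
    refine Measurable.mul (Complex.measurable_ofReal.comp (Dl_meas.comp measurable_fst)) ?_
    fun_prop
  have hint : Integrable (Function.uncurry K) (μ.prod μ) := by
    rw [integrable_prod_iff hm.aestronglyMeasurable]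
    constructor
    · refine (ae_restrict_iff' measurableSet_Ioi).2 (Eventually.of_forall fun v hv => ?_)
      simp only [Function.uncurry, hK]
      rw [hμ]
      refine IntegrableOn.integrable ?_
      rw [integrableOn_indicator_iff measurableSet_Ioi]
      refine Integrable.const_mul ?_ _
      have : IntegrableOn (fun t : ℝ => (t:ℂ) ^ (-(s+2))) (Ioi 1) :=
        integrableOn_Ioi_cpow_of_lt (by simp; linarith) one_pos
      exact this.mono_set inter_subset_right
    · have h2 := (Dl_integrable hs).norm.const_mul (1 / (s.re + 1))
      refine h2.congr ?_
      refine (ae_restrict_iff' measurableSet_Ioi).2 (Eventually.of_forall fun v hv => ?_)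
      have hv0 : (0:ℝ) < v := lt_trans one_pos hv
      simp only [Function.uncurry, hK]
      have e1 : ∀ u : ℝ, ‖(Ioi v).indicator (fun u : ℝ => (Dl v : ℂ) * (u:ℂ) ^ (-(s+2))) u‖ =
         (Ioi v).indicator (fun u : ℝ => |Dl v| * u ^ (-(s.re+2))) u := by
        intro u
        rw [norm_indicator_eq_indicator_norm]
        refine congrFun (indicator_congr fun u hu => ?_) u
        have hu0 : (0:ℝ) < u := lt_trans hv0 hu
        rw [norm_mul, Complex.norm_cpow_eq_rpow_re_of_pos hu0, Complex.norm_real, Real.norm_eq_abs]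
        simp
      simp only [e1]
      rw [hμ, integral_indicator measurableSet_Ioi, Measure.restrict_restrict measurableSet_Ioi,
        Ioi_inter_Ioi, sup_of_le_left (le_of_lt hv), integral_const_mul,
        integral_Ioi_rpow_of_lt (by linarith) hv0, norm_mul, Complex.norm_cpow_eq_rpow_re_of_pos hv0,
        Complex.norm_real, Real.norm_eq_abs]
      simp only [neg_re, add_re, one_re]
      have : -(s.re+2)+1 = -(s.re+1) := by ring
      rw [this]
      have h0 : s.re + 1 ≠ 0 := by linarith
      field_simp
  have hswap := integral_integral_swap hint
  have hL : ∫ v, ∫ u, K v u ∂μ ∂μ = (1/(s+1)) * ∫ v in Ioi (1:ℝ), (Dl v : ℂ) * (v:ℂ) ^ (-(s+1)) := by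
    rw [← integral_const_mul, hμ]
    refine setIntegral_congr_fun measurableSet_Ioi fun v hv => ?_
    have hv0 : (0:ℝ) < v := lt_trans one_pos hv
    simp only [hK, ← hμ]
    rw [hinner v hv, integral_const_mul, integral_Ioi_cpow_of_lt (by simp; linarith) hv0]
    have : -(s+2)+1 = -(s+1) := by ring
    rw [this]
    field_simp
  have hRR : ∫ u, ∫ v, K v u ∂μ ∂μ = ∫ u in Ioi (1:ℝ), (D1 u : ℂ) * (u:ℂ) ^ (-(s+2)) := by
    rw [hμ]
    refine setIntegral_congr_fun measurableSet_Ioi fun u hu => ?_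
    simp only [hK]
    have e1 : ∀ v : ℝ, (Ioi v).indicator (fun u : ℝ => (Dl v : ℂ) * (u:ℂ) ^ (-(s+2))) u =
       (Iio u).indicator (fun v : ℝ => (Dl v : ℂ) * (u:ℂ) ^ (-(s+2))) v := by
      intro v; simp [indicator]
    simp only [e1]
    rw [integral_indicator measurableSet_Iio, Measure.restrict_restrict measurableSet_Iio,
      integral_mul_const, inter_comm, Ioi_inter_Iio, ← integral_Ioc_eq_integral_Ioo,
      ← intervalIntegral.integral_of_le (le_of_lt hu), D1, intervalIntegral.integral_ofReal]
  rw [hL, hRR] at hswap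
  rw [← hswap]
  field_simp
  rw [hμ]

end

section
open Complex MeasureTheory Set Filter Topology

lemma Q0_diff (hRH : RiemannHypothesis) {s : ℂ} (hs : 1/2 < s.re) : DifferentiableAt ℂ Q0 s := by
  have hop : IsOpen {z : ℂ | 0 < z.re} := isOpen_lt continuous_const continuous_re
  have h1 : DifferentiableOn ℂ Fz {z : ℂ | 0 < z.re} := fun z hz => (Fz_diff hz).differentiableWithinAt
  have hmem : {z : ℂ | 0 < z.re} ∈ 𝓝 s := hop.mem_nhds (by simp only [mem_ofPred_eq]; linarith)
  have h2 : DifferentiableAt ℂ (deriv Fz) s := (h1.deriv hop).differentiableAt hmem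
  unfold Q0
  exact (h2.div (Fz_diff (by linarith)) (Fz_ne_zero hRH hs)).neg

noncomputable def f1 : ℝ → ℂ := (Ioi (1:ℝ)).indicator fun t => (D1 t : ℂ)

lemma f1_zero (t : ℝ) (ht : t ≤ 1) : f1 t = 0 := by
  unfold f1; rw [indicator_of_notMem]; simpa using ht

lemma f1_locInt : LocallyIntegrableOn f1 (Ioi 0) := by
  have h : Continuous fun t => (D1 t : ℂ) := Complex.continuous_ofReal.comp D1_cont
  have h2 : LocallyIntegrable f1 := by
    unfold f1
    exact h.locallyIntegrable.indicator measurableSet_Ioi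
  exact h2.locallyIntegrableOn _

lemma f1_top : f1 =O[atTop] (fun t : ℝ => t ^ (-(-2:ℝ))) := by
  refine Asymptotics.IsBigO.of_bound 7 ?_
  filter_upwards [eventually_gt_atTop 1] with t ht
  rw [f1, indicator_of_mem (by exact ht), Complex.norm_real, Real.norm_eq_abs]
  have := D1_bound ht.le
  rw [show -(-2:ℝ) = (2:ℕ) by norm_num, Real.rpow_natCast, Real.norm_eq_abs, abs_of_nonneg (by positivity : (0:ℝ) ≤ t ^ 2)]
  exact this

lemma f1_mellin {s : ℂ} (hs : 1 < s.re) : mellin f1 (-(s+1)) = Q0 s / (s * (s+1)) := by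
  have hs1 : s + 1 ≠ 0 := by
    intro h; have := congrArg Complex.re h; simp at this; linarith
  have h1 : Ioi (1:ℝ) ⊆ Ioi 0 := Ioi_subset_Ioi zero_le_one
  have e : mellin f1 (-(s+1)) = ∫ u in Ioi (1:ℝ), (D1 u : ℂ) * (u:ℂ) ^ (-(s+2)) := by
    unfold mellin
    rw [setIntegral_eq_of_subset_of_forall_sdiff_eq_zero measurableSet_Ioi h1]
    · refine setIntegral_congr_fun measurableSet_Ioi fun t ht => ?_
      simp only [f1, indicator_of_mem ht, smul_eq_mul]
      rw [mul_comm]; congr 2; ring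
    · intro t ht
      rw [f1_zero t (by simpa using ht.2)]; simp
  have h2 := D1_fubini hs
  rw [Dl_mellin hs, ← e] at h2
  rw [← div_div, h2]
  field_simp

lemma s_lower (s : ℂ) (hs : 1/2 ≤ s.re) : (1 + |s.im|) ≤ 4 * ‖s‖ := by
  have h1 := Complex.abs_im_le_norm s
  have h2 := (le_abs_self _).trans (Complex.abs_re_le_norm s)
  linarith

lemma Q_bound (hRH : RiemannHypothesis) : ∃ C : ℝ, 0 < C ∧ ∀ s : ℂ, 11/20 ≤ s.re → s.re ≤ 2 →
    ‖Q0 s / (s * (s+1))‖ ≤ C * (1 + |s.im|) ^ (-(31/16) : ℝ) := by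
  obtain ⟨C, hC, h⟩ := logDeriv_bound hRH
  refine ⟨16 * C, by positivity, fun s h1 h2 => ?_⟩
  have h3 := h s h1 h2
  have a1 := s_lower s (by linarith)
  have a2 := s_lower (s+1) (by simp; linarith)
  have him : (s+1).im = s.im := by simp
  rw [him] at a2
  have hp : 0 < 1 + |s.im| := by positivity
  rw [norm_div, norm_mul, Q0, norm_neg, div_le_iff₀ (mul_pos (by linarith) (by linarith))]
  have e : (1 + |s.im|) ^ (1/16:ℝ) = (1 + |s.im|) ^ (-(31/16):ℝ) * (1 + |s.im|)^2 := by
    rw [← Real.rpow_natCast, ← Real.rpow_add hp]; norm_num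
  rw [e] at h3
  refine h3.trans ?_
  have h4 : (1 + |s.im|)^2 ≤ 16 * (‖s‖ * ‖s+1‖) := by nlinarith
  have h5 : 0 ≤ C * (1 + |s.im|) ^ (-(31/16):ℝ) := by positivity
  nlinarith [mul_le_mul_of_nonneg_left h4 h5]

lemma D1_formula (hRH : RiemannHypothesis) {x : ℝ} (hx : 1 < x) :
    (D1 x : ℂ) = (1 / (2 * Real.pi) : ℝ) • ∫ y : ℝ, (x:ℂ) ^ (((11/20 : ℝ) : ℂ) + y * I + 1) *
      (Q0 (((11/20 : ℝ) : ℂ) + y * I) / ((((11/20 : ℝ) : ℂ) + y * I) * (((11/20 : ℝ) : ℂ) + y * I + 1))) := by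
  have hx0 : 0 < x := by linarith
  have hxc : (x:ℂ) ≠ 0 := by exact_mod_cast hx0.ne'
  obtain ⟨C, hC, hQ⟩ := Q_bound hRH
  have hsh := shift_contour (f := fun s => (x:ℂ) ^ (s + 1) * (Q0 s / (s * (s+1)))) (a := 11/20) (b := 2)
    (B := x ^ (3:ℝ) * C) (e := 31/16) (by norm_num) (by norm_num) ?_ ?_
  rotate_left
  · intro s h1 h2
    have h3 : s ≠ 0 := by rintro rfl; simp at h1; linarith
    have h4 : s + 1 ≠ 0 := by
      intro h; have := congrArg Complex.re h; simp at this; linarith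
    have h5 : DifferentiableAt ℂ (fun s : ℂ => (x:ℂ) ^ (s + 1)) s :=
      (differentiableAt_id.add_const 1).const_cpow (Or.inl hxc)
    have h6 : DifferentiableAt ℂ (fun s : ℂ => s * (s+1)) s := by fun_prop
    exact h5.mul ((Q0_diff hRH (by linarith)).div h6 (mul_ne_zero h3 h4))
  · intro s h1 h2
    rw [norm_mul, mul_assoc, Complex.norm_cpow_eq_rpow_re_of_pos hx0]
    refine mul_le_mul ?_ (hQ s h1 h2) (norm_nonneg _) (by positivity)
    exact Real.rpow_le_rpow_of_exponent_le hx.le (by simp; linarith)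
  have hmel : ∀ y : ℝ, mellin f1 (((-3:ℝ):ℂ) + y * I) =
      Q0 (2 + ((-y:ℝ):ℂ) * I) / ((2 + ((-y:ℝ):ℂ) * I) * (2 + ((-y:ℝ):ℂ) * I + 1)) := by
    intro y
    rw [← f1_mellin (by simp)]
    congr 1; push_cast; ring
  have hcont : Continuous fun y : ℝ => Q0 (2 + (y:ℂ) * I) / ((2 + (y:ℂ) * I) * (2 + (y:ℂ) * I + 1)) := by
    refine Continuous.div ?_ (by fun_prop) ?_
    · rw [continuous_iff_continuousAt]
      intro y
      have : ContinuousAt Q0 (2 + y * I) := (Q0_diff hRH (by simp; norm_num)).continuousAt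
      exact ContinuousAt.comp (f := fun y : ℝ => (2 : ℂ) + y * I) this (by fun_prop)
    · intro y h
      rcases mul_eq_zero.1 h with h | h <;>
      · have := congrArg Complex.re h
        norm_num at this
  have hvi : VerticalIntegrable (mellin f1) (-3) := by
    unfold VerticalIntegrable
    simp only [hmel]
    have h0 : Integrable (fun y : ℝ => C * (1 + ‖y‖) ^ (-(31/16) : ℝ)) :=
      (integrable_one_add_norm (by norm_num)).const_mul C
    refine h0.mono' (Continuous.aestronglyMeasurable (hcont.comp continuous_neg)) (Eventually.of_forall fun y => ?_)
    simpa using hQ (2 + ((-y:ℝ):ℂ) * I) (by simp; norm_num) (by simp)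
  have hinv := mellinInv_mellin_eq (-3) f1 hx0
    (mellinConvergent_of_isBigO_rpow f1_locInt f1_top (by norm_num) (ind_bot f1 (-4) f1_zero) (by norm_num)) hvi (by
      have : ContinuousAt (fun t => (D1 t : ℂ)) x := (Complex.continuous_ofReal.comp D1_cont).continuousAt
      refine this.congr ?_
      filter_upwards [Ioi_mem_nhds hx] with t ht
      rw [f1, indicator_of_mem ht])
  rw [f1, indicator_of_mem (by exact hx)] at hinv
  change _ = _ at hinv
  rw [← hinv, mellinInv]
  congr 1
  rw [hsh, ← integral_neg_eq_self]
  refine integral_congr_ae (Eventually.of_forall fun y => ?_)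
  change _ • mellin f1 _ = _
  simp only [hmel, smul_eq_mul]
  push_cast
  congr 2 <;> ring_nf

end

section
open Complex MeasureTheory Set Filter Topology

lemma cpow_diff {s : ℂ} (hs : s.re = 11/20) {w v : ℝ} (hw : 1 < w) (hv : w ≤ v) :
    ‖(v:ℂ)^(s+1) - (w:ℂ)^(s+1)‖ ≤ 2 * ‖s+1‖ ^ (7/8:ℝ) * (v - w) ^ (7/8:ℝ) * v ^ (27/40:ℝ) := by
  have hs1 : s + 1 ≠ 0 := by
    intro h; have := congrArg Complex.re h; simp at this; linarith
  have hs2 : s ≠ -1 := fun h => hs1 (by rw [h]; ring)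
  have hw0 : 0 < w := by linarith
  have hv0 : 0 < v := by linarith
  have h1 : ‖(v:ℂ)^(s+1) - (w:ℂ)^(s+1)‖ ≤ ‖s+1‖ * (v - w) * v ^ (11/20:ℝ) := by
    have := (convex_Icc w v).norm_image_sub_le_of_norm_hasDerivWithin_le
      (f := fun y : ℝ => (y:ℂ)^(s+1)/(s+1)) (f' := fun y : ℝ => (y:ℂ)^s) (C := v ^ (11/20:ℝ))
      (x := w) (y := v)
      (fun t ht => (hasDerivAt_ofReal_cpow_const' (by linarith [ht.1] : t ≠ 0) hs2).hasDerivWithinAt)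
      (fun t ht => by
        have ht0 : 0 < t := by linarith [ht.1]
        rw [Complex.norm_cpow_eq_rpow_re_of_pos ht0, hs]
        exact Real.rpow_le_rpow ht0.le ht.2 (by norm_num))
      ⟨le_rfl, hv⟩ ⟨hv, le_rfl⟩
    rw [← sub_div, norm_div, div_le_iff₀ (norm_pos_iff.2 hs1), Real.norm_eq_abs,
      abs_of_nonneg (by linarith : 0 ≤ v - w)] at this
    linarith
  have h2 : ‖(v:ℂ)^(s+1) - (w:ℂ)^(s+1)‖ ≤ 2 * v ^ (31/20:ℝ) := by
    refine (norm_sub_le _ _).trans ?_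
    rw [Complex.norm_cpow_eq_rpow_re_of_pos hw0, Complex.norm_cpow_eq_rpow_re_of_pos hv0]
    have e : (s+1).re = 31/20 := by simp [hs]; norm_num
    rw [e]
    have := Real.rpow_le_rpow hw0.le hv (by norm_num : (0:ℝ) ≤ 31/20)
    linarith
  obtain ⟨a, ha⟩ : ∃ a, a = ‖(v:ℂ)^(s+1) - (w:ℂ)^(s+1)‖ := ⟨_, rfl⟩
  have ha0 : 0 ≤ a := ha ▸ norm_nonneg _
  rw [← ha] at h1 h2 ⊢
  have hvw : 0 ≤ v - w := by linarith
  calc a = a ^ (7/8:ℝ) * a ^ (1/8:ℝ) := by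
        rw [← Real.rpow_add_of_nonneg ha0 (by norm_num) (by norm_num)]; norm_num
    _ ≤ (‖s+1‖ * (v - w) * v ^ (11/20:ℝ)) ^ (7/8:ℝ) * (2 * v ^ (31/20:ℝ)) ^ (1/8:ℝ) := by
        gcongr
    _ = 2 ^ (1/8:ℝ) * ‖s+1‖ ^ (7/8:ℝ) * (v - w) ^ (7/8:ℝ) * v ^ (27/40:ℝ) := by
        rw [Real.mul_rpow (by positivity) (by positivity), Real.mul_rpow (by positivity) (by positivity),
          Real.mul_rpow (by positivity) (by positivity), ← Real.rpow_mul hv0.le, ← Real.rpow_mul hv0.le,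
          show (27/40:ℝ) = 11/20*(7/8) + 31/20*(1/8) by norm_num, Real.rpow_add hv0]
        ring
    _ ≤ _ := by
        have : (2:ℝ) ^ (1/8:ℝ) ≤ 2 := by
          calc (2:ℝ) ^ (1/8:ℝ) ≤ 2 ^ (1:ℝ) := Real.rpow_le_rpow_of_exponent_le (by norm_num) (by norm_num)
            _ = 2 := by norm_num
        gcongr

lemma D1_diff (hRH : RiemannHypothesis) : ∃ K : ℝ, 0 < K ∧ ∀ w v : ℝ, 1 < w → w ≤ v →
    |D1 v - D1 w| ≤ K * (v - w) ^ (7/8:ℝ) * v ^ (27/40:ℝ) := by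
  obtain ⟨C, hC, hQ⟩ := Q_bound hRH
  obtain ⟨J, hJ⟩ : ∃ J : ℝ, J = ∫ y : ℝ, (1 + ‖y‖) ^ (-(17/16) : ℝ) := ⟨_, rfl⟩
  have hJi : Integrable (fun y : ℝ => (1 + ‖y‖) ^ (-(17/16) : ℝ)) := integrable_one_add_norm (by norm_num)
  have hJ0 : 0 ≤ J := hJ ▸ integral_nonneg fun y => by positivity
  refine ⟨4 * C * (J + 1), by positivity, fun w v hw hv => ?_⟩
  have hw0 : 0 < w := by linarith
  have hv0 : 0 < v := by linarith
  set S : ℝ → ℂ := fun y => ((11/20 : ℝ) : ℂ) + y * I with hS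
  have hre : ∀ y, (S y).re = 11/20 := fun y => by simp [hS]
  have him : ∀ y, (S y).im = y := fun y => by simp [hS]
  set g : ℝ → ℂ := fun y => Q0 (S y) / (S y * (S y + 1)) with hg
  have hgb : ∀ y, ‖g y‖ ≤ C * (1 + ‖y‖) ^ (-(31/16) : ℝ) := by
    intro y
    have := hQ (S y) (hre y).ge (by rw [hre]; norm_num)
    rw [him] at this
    exact this
  have hScont : Continuous S := by simp only [hS]; fun_prop
  have hgc : Continuous g := by
    refine Continuous.div ?_ (by fun_prop) ?_
    · rw [continuous_iff_continuousAt]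
      intro y
      exact ContinuousAt.comp (f := S) (Q0_diff hRH (by rw [hre]; norm_num)).continuousAt hScont.continuousAt
    · intro y h
      rcases mul_eq_zero.1 h with h | h <;>
      · have := congrArg Complex.re h
        simp [hre] at this
        try linarith
  have hint : ∀ x : ℝ, 0 < x → Integrable (fun y => (x:ℂ) ^ (S y + 1) * g y) := by
    intro x hx
    have h0 : Integrable (fun y : ℝ => x ^ (31/20:ℝ) * (C * (1 + ‖y‖) ^ (-(31/16) : ℝ))) :=
      ((integrable_one_add_norm (by norm_num)).const_mul C).const_mul _
    refine h0.mono' (Continuous.aestronglyMeasurable ?_) (Eventually.of_forall fun y => ?_)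
    · refine Continuous.mul ?_ hgc
      exact Continuous.const_cpow (by fun_prop) (Or.inl (by exact_mod_cast hx.ne'))
    · rw [norm_mul, Complex.norm_cpow_eq_rpow_re_of_pos hx]
      have : (S y + 1).re = 31/20 := by simp [hre]; norm_num
      rw [this]
      exact mul_le_mul_of_nonneg_left (hgb y) (by positivity)
  have e : ((D1 v - D1 w : ℝ) : ℂ) = (1 / (2 * Real.pi) : ℝ) • ∫ y : ℝ, ((v:ℂ)^(S y + 1) - (w:ℂ)^(S y + 1)) * g y := by
    push_cast
    rw [D1_formula hRH hw, D1_formula hRH (by linarith : 1 < v), ← smul_sub, ← integral_sub (hint v hv0) (hint w hw0)]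
    congr 1
    refine integral_congr_ae (Eventually.of_forall fun y => ?_)
    simp only [hS, hg]; ring
  have e2 : |D1 v - D1 w| = ‖((D1 v - D1 w : ℝ) : ℂ)‖ := by rw [Complex.norm_real, Real.norm_eq_abs]
  rw [e2, e, norm_smul]
  have hpi : ‖(1 / (2 * Real.pi) : ℝ)‖ ≤ 1 := by
    rw [Real.norm_eq_abs, abs_of_nonneg (by positivity), div_le_one (by positivity)]
    linarith [Real.pi_gt_three]
  have hb : ‖∫ y : ℝ, ((v:ℂ)^(S y + 1) - (w:ℂ)^(S y + 1)) * g y‖ ≤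
      ∫ y : ℝ, (4 * C * (v - w) ^ (7/8:ℝ) * v ^ (27/40:ℝ)) * (1 + ‖y‖) ^ (-(17/16) : ℝ) := by
    refine norm_integral_le_of_norm_le (hJi.const_mul _) (Eventually.of_forall fun y => ?_)
    rw [norm_mul]
    have h1 := cpow_diff (hre y) hw hv
    have hp : 0 < 1 + ‖y‖ := by positivity
    have h2 : ‖S y + 1‖ ^ (7/8:ℝ) ≤ 2 * (1 + ‖y‖) ^ (7/8:ℝ) := by
      have h3 : ‖S y + 1‖ ≤ 2 * (1 + ‖y‖) := by
        refine (Complex.norm_le_abs_re_add_abs_im _).trans ?_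
        have : (S y + 1).re = 31/20 := by simp [hre]; norm_num
        have h4 : (S y + 1).im = y := by simp [him]
        rw [this, h4, Real.norm_eq_abs, abs_of_pos (by norm_num : (0:ℝ) < 31/20)]
        have := abs_nonneg y
        linarith
      calc _ ≤ (2 * (1 + ‖y‖)) ^ (7/8:ℝ) := by gcongr
        _ = 2 ^ (7/8:ℝ) * (1 + ‖y‖) ^ (7/8:ℝ) := Real.mul_rpow (by norm_num) hp.le
        _ ≤ _ := by
          gcongr
          calc (2:ℝ) ^ (7/8:ℝ) ≤ 2 ^ (1:ℝ) := Real.rpow_le_rpow_of_exponent_le (by norm_num) (by norm_num)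
            _ = 2 := by norm_num
    have hvw : 0 ≤ v - w := by linarith
    calc _ ≤ (2 * (2 * (1 + ‖y‖) ^ (7/8:ℝ)) * (v - w) ^ (7/8:ℝ) * v ^ (27/40:ℝ)) * (C * (1 + ‖y‖) ^ (-(31/16) : ℝ)) := by
          refine mul_le_mul (h1.trans ?_) (hgb y) (norm_nonneg _) (by positivity)
          gcongr
      _ = _ := by
          rw [show (-(17/16):ℝ) = 7/8 + -(31/16) by norm_num, Real.rpow_add hp]; ring
  rw [integral_const_mul, ← hJ] at hb
  have hvw : 0 ≤ v - w := by linarith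
  have hq : 0 ≤ 4 * C * (v - w) ^ (7/8:ℝ) * v ^ (27/40:ℝ) := by positivity
  calc _ ≤ 1 * (4 * C * (v - w) ^ (7/8:ℝ) * v ^ (27/40:ℝ) * J) :=
        mul_le_mul hpi hb (norm_nonneg _) zero_le_one
    _ ≤ _ := by nlinarith

lemma psi_bound (hRH : RiemannHypothesis) : ∃ K : ℝ, 0 < K ∧ ∀ x : ℝ, 1 ≤ x →
    |Chebyshev.psi x - x| ≤ K * x ^ (3/5:ℝ) := by
  obtain ⟨K, hK, hD⟩ := D1_diff hRH
  refine ⟨300 + 2 * K, by positivity, fun x hx => ?_⟩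
  have hx0 : 0 < x := by linarith
  have hx1 : 1 ≤ x ^ (3/5:ℝ) := Real.one_le_rpow hx (by norm_num)
  by_cases hx32 : x < 32
  · have h := Dl_bound hx
    unfold Dl at h
    rw [abs_le] at h ⊢
    constructor <;> nlinarith
  push Not at hx32
  obtain ⟨h, hh⟩ : ∃ h : ℝ, h = x ^ (3/5:ℝ) := ⟨_, rfl⟩
  have hh1 : 1 ≤ h := hh ▸ hx1
  have hh0 : 0 < h := by linarith
  have hle : 4 * h ≤ x := by
    have h4 : (4:ℝ) ≤ x ^ (2/5:ℝ) := by
      calc (4:ℝ) = 32 ^ (2/5:ℝ) := by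
            rw [show (32:ℝ) = 2 ^ (5:ℝ) by norm_num, ← Real.rpow_mul (by norm_num)]; norm_num
        _ ≤ _ := Real.rpow_le_rpow (by norm_num) hx32 (by norm_num)
    have : x = x ^ (2/5:ℝ) * h := by
      rw [hh, ← Real.rpow_add hx0]; norm_num
    nlinarith
  have hmain : ∀ w v : ℝ, 1 < w → v - w = h → v ≤ 2 * x → |D1 v - D1 w| ≤ 2 * K * h * h := by
    intro w v hw hvw hv
    have h1 := hD w v hw (by linarith)
    rw [hvw] at h1
    refine h1.trans ?_
    have h2 : v ^ (27/40:ℝ) ≤ 2 * x ^ (27/40:ℝ) := by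
      calc _ ≤ (2*x) ^ (27/40:ℝ) := Real.rpow_le_rpow (by linarith) hv (by norm_num)
        _ = 2 ^ (27/40:ℝ) * x ^ (27/40:ℝ) := Real.mul_rpow (by norm_num) hx0.le
        _ ≤ _ := by
          gcongr
          calc (2:ℝ) ^ (27/40:ℝ) ≤ 2 ^ (1:ℝ) := Real.rpow_le_rpow_of_exponent_le (by norm_num) (by norm_num)
            _ = 2 := by norm_num
    have h3 : h ^ (7/8:ℝ) * x ^ (27/40:ℝ) = h * h := by
      rw [hh, ← Real.rpow_mul hx0.le, ← Real.rpow_add hx0, ← Real.rpow_add hx0]; norm_num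
    calc _ ≤ K * h ^ (7/8:ℝ) * (2 * x ^ (27/40:ℝ)) := by gcongr
      _ = 2 * K * (h ^ (7/8:ℝ) * x ^ (27/40:ℝ)) := by ring
      _ = _ := by rw [h3]; ring
  have hdiff : ∀ w v : ℝ, D1 v - D1 w = ∫ u in w..v, Dl u := by
    intro w v
    exact intervalIntegral.integral_interval_sub_left (Dl_intInt _ _) (Dl_intInt _ _)
  have up : h * (Chebyshev.psi x - x - h) ≤ 2 * K * h * h := by
    refine le_trans ?_ ((le_abs_self _).trans (hmain x (x + h) (by linarith) (by ring) (by linarith)))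
    rw [hdiff]
    have : ∫ u in x..(x+h), (Chebyshev.psi x - x - h) ≤ ∫ u in x..(x+h), Dl u := by
      refine intervalIntegral.integral_mono_on (by linarith) (by simp) (Dl_intInt _ _) fun u hu => ?_
      have := Chebyshev.psi_mono hu.1
      unfold Dl; linarith [hu.2]
    rw [intervalIntegral.integral_const, smul_eq_mul] at this
    linarith
  have lo : -(2 * K * h * h) ≤ h * (Chebyshev.psi x - x + h + 1) := by
    refine le_trans ((abs_le.1 (hmain (x - h) x (by linarith) (by ring) (by linarith))).1) ?_
    rw [hdiff]
    have : ∫ u in (x-h)..x, Dl u ≤ ∫ u in (x-h)..x, (Chebyshev.psi x - x + h + 1) := by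
      refine intervalIntegral.integral_mono_on (by linarith) (Dl_intInt _ _) (by simp) fun u hu => ?_
      have := Chebyshev.psi_mono hu.2
      unfold Dl; linarith [hu.1]
    rw [intervalIntegral.integral_const, smul_eq_mul] at this
    linarith
  have up' : Chebyshev.psi x - x - h ≤ 2 * K * h := by
    refine le_of_mul_le_mul_left ?_ hh0; linarith
  have lo' : -(2 * K * h) ≤ Chebyshev.psi x - x + h + 1 := by
    refine le_of_mul_le_mul_left ?_ hh0; linarith
  rw [← hh, abs_le]
  constructor <;> nlinarith

lemma theta_bound (hRH : RiemannHypothesis) : ∃ K : ℝ, 0 < K ∧ ∀ x : ℝ, 1 ≤ x →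
    |Chebyshev.theta x - x| ≤ K * x ^ (3/5:ℝ) := by
  obtain ⟨K, hK, h⟩ := psi_bound hRH
  obtain ⟨C, hC⟩ := Chebyshev.psi_sub_theta_le_mul_sqrt
  refine ⟨K + |C|, by positivity, fun x hx => ?_⟩
  have h1 := h x hx
  have h2 := hC x
  have h3 := Chebyshev.theta_le_psi x
  have h4 : √x ≤ x ^ (3/5:ℝ) := by
    rw [Real.sqrt_eq_rpow]
    exact Real.rpow_le_rpow_of_exponent_le hx (by norm_num)
  have h5 : C * √x ≤ |C| * x ^ (3/5:ℝ) := by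
    calc C * √x ≤ |C| * √x := by gcongr; exact le_abs_self _
      _ ≤ _ := by gcongr
  rw [abs_le] at h1 ⊢
  constructor <;> nlinarith

end

section
open MeasureTheory Set Filter Topology

noncomputable def PP (y z : ℝ) : Finset ℕ := (Finset.Ioc ⌊y⌋₊ ⌊z⌋₊).filter Nat.Prime

lemma mem_PP {y z : ℝ} (hy : 0 ≤ y) (hz : 0 ≤ z) {p : ℕ} :
    p ∈ PP y z ↔ p.Prime ∧ y < p ∧ (p:ℝ) ≤ z := by
  rw [PP, Finset.mem_filter, Finset.mem_Ioc, Nat.floor_lt hy, Nat.le_floor_iff hz]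
  tauto

lemma theta_diff {a b : ℝ} (hab : a ≤ b) :
    ∑ p ∈ PP a b, Real.log p = Chebyshev.theta b - Chebyshev.theta a := by
  have h : ⌊a⌋₊ ≤ ⌊b⌋₊ := Nat.floor_le_floor hab
  rw [eq_sub_iff_add_eq, Chebyshev.theta, Chebyshev.theta, PP, Finset.sum_filter, Finset.sum_filter, Finset.sum_filter,
    add_comm]
  exact Finset.sum_Ioc_consecutive _ (Nat.zero_le _) h

noncomputable def RR (y z r : ℝ) : Finset (ℕ × ℕ) :=
  (PP y z ×ˢ PP y z).filter fun pq => y * z / r < (pq.1:ℝ) * pq.2 ∧ (pq.1:ℝ) * pq.2 ≤ y * z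

noncomputable def WW (y z r : ℝ) : ℝ := ∑ pq ∈ RR y z r, Real.log pq.1 * Real.log pq.2

lemma max_le' {y z r u : ℝ} (hy : 0 < y) (hr : 1 ≤ r) (hu : 0 < u) (huz : u ≤ z) :
    max y (y * z / (r * u)) ≤ y * z / u := by
  have hz : 0 < z := by linarith
  refine max_le ?_ ?_
  · rw [le_div_iff₀ hu]; gcongr
  · gcongr; nlinarith

lemma mem_iff {y z r u v : ℝ} (hr : 0 < r) (hu : 0 < u) (hv : 0 < v) (hyu : y < u) (hyv : y < v) :
    v ∈ Ioc (max y (y * z / (r * u))) (y * z / u) ↔ u ∈ Ioc (max y (y * z / (r * v))) (y * z / v) := by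
  simp only [mem_Ioc, max_lt_iff, hyu, hyv, true_and]
  rw [div_lt_iff₀ (by positivity), div_lt_iff₀ (by positivity), le_div_iff₀ hu, le_div_iff₀ hv,
    mul_comm v u, show v * (r * u) = u * (r * v) by ring]

lemma sum_PP_ite {y z r : ℝ} (hy : 0 < y) (hr : 1 ≤ r) {v : ℝ} (hv : v ∈ Ioc y z) :
    Chebyshev.theta (y * z / v) - Chebyshev.theta (max y (y * z / (r * v))) =
    ∑ p ∈ PP y z, (if (p:ℝ) ∈ Ioc (max y (y * z / (r * v))) (y * z / v) then Real.log p else 0) := by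
  have hv0 : 0 < v := hy.trans hv.1
  have hz : 0 < z := hv0.trans_le hv.2
  rw [← theta_diff (max_le' hy hr hv0 hv.2), ← Finset.sum_filter]
  refine Finset.sum_congr ?_ fun _ _ => rfl
  ext p
  rw [Finset.mem_filter, mem_PP hy.le hz.le, mem_PP (hy.le.trans (le_max_left _ _)) (by positivity), mem_Ioc]
  constructor
  · rintro ⟨h1, h2, h3⟩
    refine ⟨⟨h1, (le_max_left _ _).trans_lt h2, h3.trans ?_⟩, h2, h3⟩
    rw [div_le_iff₀ hv0]
    nlinarith [hv.1]
  · rintro ⟨⟨h1, h2, h3⟩, h4, h5⟩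
    exact ⟨h1, h4, h5⟩

lemma swapW {y z r : ℝ} (hy : 0 < y) (hyz : y < z) (hr : 1 ≤ r) {w : ℝ → ℝ}
    (hw : IntegrableOn w (Ioc y z)) :
    ∑ p ∈ PP y z, Real.log p * ∫ v in (max y (y * z / (r * p)))..(y * z / p), w v =
    ∫ v in y..z, w v * (Chebyshev.theta (y * z / v) - Chebyshev.theta (max y (y * z / (r * v)))) := by
  have hz : 0 < z := by linarith
  rw [intervalIntegral.integral_of_le hyz.le]
  have e1 : ∫ v in Ioc y z, w v * (Chebyshev.theta (y * z / v) - Chebyshev.theta (max y (y * z / (r * v)))) =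
      ∫ v in Ioc y z, ∑ p ∈ PP y z, Real.log p * (Ioc (max y (y * z / (r * p))) (y * z / p)).indicator w v := by
    refine setIntegral_congr_fun measurableSet_Ioc fun v hv => ?_
    have hv0 : 0 < v := hy.trans hv.1
    rw [sum_PP_ite hy hr hv, Finset.mul_sum]
    refine Finset.sum_congr rfl fun p hp => ?_
    have hp' := (mem_PP hy.le hz.le).1 hp
    rw [indicator_apply]
    simp only [mem_iff (z := z) (by linarith : 0 < r) (hy.trans hp'.2.1) hv0 hp'.2.1 hv.1]
    split_ifs <;> ring
  rw [e1, integral_finsetSum]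
  · refine Finset.sum_congr rfl fun p hp => ?_
    have hp' := (mem_PP hy.le hz.le).1 hp
    have hp0 := hy.trans hp'.2.1
    rw [integral_const_mul, intervalIntegral.integral_of_le (max_le' hy hr hp0 hp'.2.2),
      integral_indicator measurableSet_Ioc, Measure.restrict_restrict measurableSet_Ioc, inter_eq_left.2]
    refine Ioc_subset_Ioc (le_max_left _ _) ?_
    rw [div_le_iff₀ hp0]; nlinarith [hp'.2.1]
  · intro p hp
    exact (hw.integrable.indicator measurableSet_Ioc).const_mul _

lemma WW_eq {y z r : ℝ} (hy : 0 < y) (hyz : y < z) (hr : 1 ≤ r) :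
    WW y z r = ∑ p ∈ PP y z, Real.log p * (Chebyshev.theta (y * z / p) - Chebyshev.theta (max y (y * z / (r * p)))) := by
  have hz : 0 < z := by linarith
  rw [WW, RR, Finset.sum_filter, Finset.sum_product]
  refine Finset.sum_congr rfl fun p hp => ?_
  have hp' := (mem_PP hy.le hz.le).1 hp
  have hp0 := hy.trans hp'.2.1
  rw [sum_PP_ite hy hr ⟨hp'.2.1, hp'.2.2⟩, Finset.mul_sum]
  refine Finset.sum_congr rfl fun q hq => ?_
  have hq' := (mem_PP hy.le hz.le).1 hq
  have : (q:ℝ) ∈ Ioc (max y (y * z / (r * p))) (y * z / p) ↔ y * z / r < (p:ℝ) * q ∧ (p:ℝ) * q ≤ y * z := by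
    simp only [mem_Ioc, max_lt_iff, hq'.2.1, true_and]
    rw [div_lt_iff₀ (by positivity), le_div_iff₀ hp0, div_lt_iff₀ (by positivity),
      mul_comm (q:ℝ) p, show (q:ℝ) * (r * p) = p * q * r by ring]
  simp only [this]
  split_ifs <;> ring

lemma anti1 {y z : ℝ} (hy : 0 < y) (hyz : y ≤ z) :
    IntervalIntegrable (fun v => Chebyshev.theta (y * z / v)) volume y z := by
  refine AntitoneOn.intervalIntegrable ?_
  rw [uIcc_of_le hyz]
  intro a ha b hb hab
  refine Chebyshev.theta_mono ?_
  have : 0 < a := hy.trans_le ha.1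
  have : 0 < z := hy.trans_le hyz
  gcongr

lemma anti2 {y z r : ℝ} (hy : 0 < y) (hyz : y ≤ z) (hr : 1 ≤ r) :
    IntervalIntegrable (fun v => Chebyshev.theta (max y (y * z / (r * v)))) volume y z := by
  refine AntitoneOn.intervalIntegrable ?_
  rw [uIcc_of_le hyz]
  intro a ha b hb hab
  refine Chebyshev.theta_mono ?_
  have : 0 < a := hy.trans_le ha.1
  have : 0 < z := hy.trans_le hyz
  refine max_le_max le_rfl ?_
  gcongr

lemma intG {y z r : ℝ} (hy : 0 < y) (hr : 1 ≤ r) (hryz : r * y ≤ z) :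
    ∫ v in y..z, (y * z / v - max y (y * z / (r * v))) =
    y * z * (Real.log (z / y) * (1 - 1 / r) - 1 + (Real.log r + 1) / r) := by
  have hr0 : 0 < r := by linarith
  have hyz : y ≤ z := by nlinarith
  have hz : 0 < z := by linarith
  have hm1 : y ≤ z / r := by rw [le_div_iff₀ hr0]; linarith
  have hm2 : z / r ≤ z := div_le_self hz.le hr
  have hm0 : 0 < z / r := by positivity
  have cI : ∀ c a b : ℝ, 0 < a → a ≤ b → IntervalIntegrable (fun v : ℝ => c / v) volume a b := by
    intro c a b ha hab
    refine ContinuousOn.intervalIntegrable ?_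
    rw [uIcc_of_le hab]
    refine ContinuousOn.div continuousOn_const continuousOn_id fun v hv => ?_
    have := ha.trans_le hv.1
    exact this.ne'
  have cM : ∀ a b : ℝ, 0 < a → a ≤ b → IntervalIntegrable (fun v : ℝ => max y (y * z / (r * v))) volume a b := by
    intro a b ha hab
    refine ContinuousOn.intervalIntegrable ?_
    rw [uIcc_of_le hab]
    refine ContinuousOn.sup continuousOn_const (ContinuousOn.div continuousOn_const (by fun_prop) fun v hv => ?_)
    have := ha.trans_le hv.1
    positivity
  have iI : ∀ c a b : ℝ, 0 < a → a ≤ b → ∫ v in a..b, c / v = c * Real.log (b / a) := by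
    intro c a b ha hab
    rw [← integral_one_div_of_pos ha (ha.trans_le hab), ← intervalIntegral.integral_const_mul]
    congr 1; ext v; ring
  rw [intervalIntegral.integral_sub (cI _ _ _ hy hyz) (cM _ _ hy hyz), iI _ _ _ hy hyz,
    ← intervalIntegral.integral_add_adjacent_intervals (cM _ _ hy hm1) (cM _ _ hm0 hm2)]
  have e1 : ∫ v in y..(z/r), max y (y * z / (r * v)) = ∫ v in y..(z/r), (y * z / r) / v := by
    refine intervalIntegral.integral_congr fun v hv => ?_
    rw [uIcc_of_le hm1] at hv
    have hv0 : 0 < v := hy.trans_le hv.1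
    rw [max_eq_right, div_div]
    rw [le_div_iff₀ (by positivity)]
    have := (le_div_iff₀ hr0).1 hv.2
    nlinarith
  have e2 : ∫ v in (z/r)..z, max y (y * z / (r * v)) = ∫ v in (z/r)..z, y := by
    refine intervalIntegral.integral_congr fun v hv => ?_
    rw [uIcc_of_le hm2] at hv
    have hv0 : 0 < v := hm0.trans_le hv.1
    rw [max_eq_left]
    rw [div_le_iff₀ (by positivity)]
    have := (div_le_iff₀ hr0).1 hv.1
    nlinarith
  rw [e1, e2, iI _ _ _ hy hm1, intervalIntegral.integral_const, smul_eq_mul]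
  have : z / r / y = (z / y) / r := by field_simp
  rw [this, Real.log_div (by positivity) hr0.ne']
  field_simp
  ring

end

section
open MeasureTheory Set Filter Topology

lemma theta_two {K : ℝ} (hK : 0 < K) (hT : ∀ x : ℝ, 1 ≤ x → |Chebyshev.theta x - x| ≤ K * x ^ (3/5:ℝ))
    {a b : ℝ} (ha : 1 ≤ a) (hab : a ≤ b) :
    |Chebyshev.theta b - Chebyshev.theta a - (b - a)| ≤ 2 * K * b ^ (3/5:ℝ) := by
  have h1 := abs_le.1 (hT a ha)
  have h2 := abs_le.1 (hT b (ha.trans hab))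
  have h3 : K * a ^ (3/5:ℝ) ≤ K * b ^ (3/5:ℝ) := by gcongr
  rw [abs_le]; constructor <;> linarith

lemma I1 {y z : ℝ} (hy : 0 < y) (hyz : y < z) :
    IntervalIntegrable (fun v : ℝ => (y * z / v) ^ (3/5:ℝ)) volume y z ∧
    ∫ v in y..z, (y * z / v) ^ (3/5:ℝ) ≤ 5/2 * ((z - y) * y ^ (3/5:ℝ)) := by
  have hz : 0 < z := by linarith
  have h0 : (0:ℝ) ∉ uIcc y z := by
    rw [uIcc_of_le hyz.le]; intro h; linarith [h.1]
  have e : ∀ v ∈ uIcc y z, (y * z / v) ^ (3/5:ℝ) = (y*z) ^ (3/5:ℝ) * v ^ (-(3/5):ℝ) := by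
    intro v hv
    rw [uIcc_of_le hyz.le] at hv
    have hv0 : 0 < v := hy.trans_le hv.1
    rw [Real.div_rpow (by positivity) hv0.le, Real.rpow_neg hv0.le, div_eq_mul_inv]
  constructor
  · refine ContinuousOn.intervalIntegrable ?_
    refine ContinuousOn.rpow_const (ContinuousOn.div continuousOn_const continuousOn_id ?_) (fun _ _ => Or.inr (by norm_num))
    intro v hv h; exact h0 ((show v = 0 from h) ▸ hv)
  · rw [intervalIntegral.integral_congr e, intervalIntegral.integral_const_mul,
      integral_rpow (Or.inl (by norm_num)), Real.mul_rpow hy.le hz.le]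
    have e1 : z = z ^ (3/5:ℝ) * z ^ (2/5:ℝ) := by rw [← Real.rpow_add hz]; norm_num
    have e2 : y = y ^ (3/5:ℝ) * y ^ (2/5:ℝ) := by rw [← Real.rpow_add hy]; norm_num
    have e3 : (-(3/5):ℝ) + 1 = 2/5 := by norm_num
    rw [e3]
    have h1 : y ^ (3/5:ℝ) ≤ z ^ (3/5:ℝ) := Real.rpow_le_rpow hy.le hyz.le (by norm_num)
    have h2 : 0 < y ^ (2/5:ℝ) := by positivity
    have h3 : 0 < y ^ (3/5:ℝ) := by positivity
    have e4 : y ^ (3/5:ℝ) * z ^ (3/5:ℝ) * ((z ^ (2/5:ℝ) - y ^ (2/5:ℝ)) / (2/5)) =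
       5/2 * y ^ (3/5:ℝ) * (z ^ (3/5:ℝ) * z ^ (2/5:ℝ) - z ^ (3/5:ℝ) * y ^ (2/5:ℝ)) := by ring
    rw [e4, ← e1]
    have h4 : y ≤ z ^ (3/5:ℝ) * y ^ (2/5:ℝ) := by
      calc y = y ^ (3/5:ℝ) * y ^ (2/5:ℝ) := e2
        _ ≤ _ := by gcongr
    nlinarith

lemma I2 {K : ℝ} (hK : 0 < K) (hT : ∀ x : ℝ, 1 ≤ x → |Chebyshev.theta x - x| ≤ K * x ^ (3/5:ℝ))
    {y z : ℝ} (hy : 1 ≤ y) (hyz : y < z) :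
    ∑ p ∈ PP y z, Real.log p * (y * z / p) ^ (3/5:ℝ) ≤
      (3 + 2 * K) * ((z - y) * y ^ (3/5:ℝ) + (y * z) ^ (3/5:ℝ) * (1 + Real.log (z / y))) := by
  have hy0 : 0 < y := by linarith
  have hz : 0 < z := by linarith
  have h0 : (0:ℝ) ∉ uIcc y z := by
    rw [uIcc_of_le hyz.le]; intro h; linarith [h.1]
  have hr : 1 ≤ z / y := by rw [le_div_iff₀ hy0]; linarith
  have hmax : ∀ v : ℝ, y ≤ v → max y (y * z / (z / y * v)) = y := by
    intro v hv
    have : 0 < v := by linarith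
    rw [max_eq_left]
    rw [div_le_iff₀ (by positivity)]
    have : y * (z / y * v) = z * v := by field_simp
    rw [this]; nlinarith
  have hw : IntervalIntegrable (fun v : ℝ => 3/5 * v ^ (-(2/5):ℝ)) volume y z :=
    (intervalIntegral.intervalIntegrable_rpow (Or.inr h0)).const_mul _
  have hsw := swapW hy0 hyz hr (w := fun v : ℝ => 3/5 * v ^ (-(2/5):ℝ)) ((intervalIntegrable_iff_integrableOn_Ioc_of_le hyz.le).1 hw)
  have e1 : ∑ p ∈ PP y z, Real.log p * (y * z / p) ^ (3/5:ℝ) = y ^ (3/5:ℝ) * (Chebyshev.theta z - Chebyshev.theta y) +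
      ∑ p ∈ PP y z, Real.log p * ∫ v in (max y (y * z / (z / y * p)))..(y * z / p), 3/5 * v ^ (-(2/5):ℝ) := by
    rw [← theta_diff hyz.le, Finset.mul_sum, ← Finset.sum_add_distrib]
    refine Finset.sum_congr rfl fun p hp => ?_
    have hp' := (mem_PP hy0.le hz.le).1 hp
    have hp0 : (0:ℝ) < p := hy0.trans hp'.2.1
    rw [hmax _ hp'.2.1.le, intervalIntegral.integral_const_mul, integral_rpow (Or.inl (by norm_num)),
      show (-(2/5):ℝ) + 1 = 3/5 by norm_num]
    ring
  have e2 : ∫ v in y..z, 3/5 * v ^ (-(2/5):ℝ) * (Chebyshev.theta (y * z / v) - Chebyshev.theta (max y (y * z / (z / y * v))))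
     ≤ ∫ v in y..z, (3/5 * (y * z) * v ^ (-(7/5):ℝ) + 6/5 * K * (y * z) ^ (3/5:ℝ) * (1 / v)) := by
    have i1 : IntervalIntegrable (fun v : ℝ => 3/5 * (y * z) * v ^ (-(7/5):ℝ) + 6/5 * K * (y * z) ^ (3/5:ℝ) * (1 / v)) volume y z :=
      ((intervalIntegral.intervalIntegrable_rpow (Or.inr h0)).const_mul _).add
        ((intervalIntegral.intervalIntegrable_one_div (fun v hv h => h0 (h ▸ hv)) continuousOn_id).const_mul _)
    refine intervalIntegral.integral_mono_on hyz.le ?_ i1 fun v hv => ?_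
    · refine IntervalIntegrable.continuousOn_mul ((anti1 hy0 hyz.le).sub (anti2 hy0 hyz.le hr)) ?_
      refine ContinuousOn.mul continuousOn_const (ContinuousOn.rpow_const continuousOn_id fun v hv => Or.inl ?_)
      intro h; exact h0 (by simpa using (show v = 0 from h) ▸ hv)
    · have hv0 : 0 < v := hy0.trans_le hv.1
      rw [hmax v hv.1]
      have hyv : y ≤ y * z / v := by rw [le_div_iff₀ hv0]; nlinarith [hv.2]
      have h1 := (abs_le.1 (theta_two hK hT hy hyv)).2
      have h2 : Chebyshev.theta (y * z / v) - Chebyshev.theta y ≤ y * z / v + 2 * K * (y * z / v) ^ (3/5:ℝ) := by linarith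
      have h3 : 0 ≤ 3/5 * v ^ (-(2/5):ℝ) := by positivity
      refine (mul_le_mul_of_nonneg_left h2 h3).trans (le_of_eq ?_)
      have f1 : v ^ (-(7/5):ℝ) = v ^ (-(2/5):ℝ) / v := by
        rw [show (-(7/5):ℝ) = -(2/5) - 1 by norm_num, Real.rpow_sub_one hv0.ne']
      have f2 : v ^ (-(2/5):ℝ) / v ^ (3/5:ℝ) = 1 / v := by
        rw [← Real.rpow_sub hv0, show (-(2/5):ℝ) - 3/5 = -1 by norm_num, Real.rpow_neg_one, one_div]
      rw [Real.div_rpow (by positivity) hv0.le, f1, ← f2]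
      ring
  have e3 : ∫ v in y..z, (3/5 * (y * z) * v ^ (-(7/5):ℝ) + 6/5 * K * (y * z) ^ (3/5:ℝ) * (1 / v)) =
      3/2 * (z * y ^ (3/5:ℝ) - y * z ^ (3/5:ℝ)) + 6/5 * K * (y * z) ^ (3/5:ℝ) * Real.log (z / y) := by
    rw [intervalIntegral.integral_add ((intervalIntegral.intervalIntegrable_rpow (Or.inr h0)).const_mul _)
        ((intervalIntegral.intervalIntegrable_one_div (fun v hv h => h0 (h ▸ hv)) continuousOn_id).const_mul _),
      intervalIntegral.integral_const_mul, intervalIntegral.integral_const_mul, integral_one_div_of_pos hy0 hz,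
      integral_rpow (Or.inr ⟨by norm_num, h0⟩), show (-(7/5):ℝ) + 1 = 3/5 - 1 by norm_num,
      Real.rpow_sub_one hy0.ne', Real.rpow_sub_one hz.ne']
    field_simp
    ring
  rw [e1, hsw]
  have h4 : y ^ (3/5:ℝ) ≤ z ^ (3/5:ℝ) := Real.rpow_le_rpow hy0.le hyz.le (by norm_num)
  have h5 := (abs_le.1 (theta_two hK hT hy hyz.le)).2
  have h6 : 0 < y ^ (3/5:ℝ) := by positivity
  have h7 : y ^ (3/5:ℝ) * (Chebyshev.theta z - Chebyshev.theta y) ≤ (z - y) * y ^ (3/5:ℝ) + 2 * K * (y * z) ^ (3/5:ℝ) := by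
    rw [Real.mul_rpow hy0.le hz.le]
    nlinarith
  have hL : 0 ≤ Real.log (z / y) := Real.log_nonneg hr
  have hP : 0 < (y * z) ^ (3/5:ℝ) := by positivity
  have h8 : y * y ^ (3/5:ℝ) ≤ y * z ^ (3/5:ℝ) := by gcongr
  rw [e3] at e2
  have h9 : 0 ≤ (z - y) * y ^ (3/5:ℝ) := mul_nonneg (by linarith) h6.le
  have h10 : 0 ≤ K * ((z - y) * y ^ (3/5:ℝ)) := by positivity
  have h11 : 0 ≤ (y * z) ^ (3/5:ℝ) * Real.log (z / y) := by positivity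
  have h12 : 0 ≤ K * ((y * z) ^ (3/5:ℝ) * Real.log (z / y)) := by positivity
  nlinarith

lemma W_bound (hRH : RiemannHypothesis) : ∃ K : ℝ, 0 < K ∧ ∀ y z r : ℝ, 1 ≤ y → y < z → 1 ≤ r → r * y ≤ z →
    |WW y z r - y * z * (Real.log (z / y) * (1 - 1 / r) - 1 + (Real.log r + 1) / r)| ≤
      K * ((z - y) * y ^ (3/5:ℝ) + (y * z) ^ (3/5:ℝ) * (1 + Real.log (z / y))) := by
  obtain ⟨K, hK, hT⟩ := theta_bound hRH
  refine ⟨2 * K * (6 + 2 * K), by positivity, fun y z r hy hyz hr hryz => ?_⟩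
  have hy0 : 0 < y := by linarith
  have hz : 0 < z := by linarith
  obtain ⟨g, hg⟩ : ∃ g : ℝ → ℝ, g = fun v => y * z / v - max y (y * z / (r * v)) := ⟨_, rfl⟩
  obtain ⟨H, hH⟩ : ∃ H : ℝ → ℝ, H = fun v => Chebyshev.theta (y * z / v) - Chebyshev.theta (max y (y * z / (r * v))) := ⟨_, rfl⟩
  have hpt : ∀ v, y ≤ v → v ≤ z → |H v - g v| ≤ 2 * K * (y * z / v) ^ (3/5:ℝ) := by
    intro v h1 h2
    have := theta_two hK hT (hy.trans (le_max_left y (y * z / (r * v)))) (max_le' hy0 hr (hy0.trans_le h1) h2)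
    rw [hH, hg]; exact this
  have hgi : IntervalIntegrable g volume y z := by
    rw [hg]
    refine ContinuousOn.intervalIntegrable ?_
    rw [uIcc_of_le hyz.le]
    refine ContinuousOn.sub (ContinuousOn.div continuousOn_const continuousOn_id fun v hv => ?_)
      (ContinuousOn.sup continuousOn_const (ContinuousOn.div continuousOn_const (by fun_prop) fun v hv => ?_))
    · exact (hy0.trans_le hv.1).ne'
    · have := hy0.trans_le hv.1
      positivity
  have hHi : IntervalIntegrable H volume y z := by
    rw [hH]; exact (anti1 hy0 hyz.le).sub (anti2 hy0 hyz.le hr)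
  have s1 : ∑ p ∈ PP y z, Real.log p * g p = ∫ v in y..z, H v := by
    have := swapW hy0 hyz hr (w := fun _ => (1:ℝ)) (by simp)
    simp only [intervalIntegral.integral_const, smul_eq_mul, mul_one, one_mul] at this
    rw [hg, hH]; exact this
  have s2 : WW y z r = ∑ p ∈ PP y z, Real.log p * H p := by
    rw [WW_eq hy0 hyz hr, hH]
  have s3 := intG hy0 hr hryz
  have s4 : |∑ p ∈ PP y z, Real.log p * H p - ∑ p ∈ PP y z, Real.log p * g p| ≤
      2 * K * ∑ p ∈ PP y z, Real.log p * (y * z / p) ^ (3/5:ℝ) := by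
    rw [← Finset.sum_sub_distrib, Finset.mul_sum]
    refine (Finset.abs_sum_le_sum_abs _ _).trans (Finset.sum_le_sum fun p hp => ?_)
    have hp' := (mem_PP hy0.le hz.le).1 hp
    have h1 : 0 ≤ Real.log p := Real.log_natCast_nonneg p
    rw [← mul_sub, abs_mul, abs_of_nonneg h1]
    have := mul_le_mul_of_nonneg_left (hpt p hp'.2.1.le hp'.2.2) h1
    linarith
  have s5 : |(∫ v in y..z, H v) - ∫ v in y..z, g v| ≤ 2 * K * (5/2 * ((z - y) * y ^ (3/5:ℝ))) := by
    rw [← intervalIntegral.integral_sub hHi hgi, ← Real.norm_eq_abs]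
    have hI := I1 hy0 hyz
    have := intervalIntegral.norm_integral_le_of_norm_le (f := fun v => H v - g v) (μ := volume) hyz.le
      (g := fun v => 2 * K * (y * z / v) ^ (3/5:ℝ))
      (Eventually.of_forall fun v hv => by rw [Real.norm_eq_abs]; exact hpt v hv.1.le hv.2) (hI.1.const_mul _)
    refine this.trans ?_
    rw [intervalIntegral.integral_const_mul]
    exact mul_le_mul_of_nonneg_left hI.2 (by positivity)
  have s6 := mul_le_mul_of_nonneg_left (I2 hK hT hy hyz) (by positivity : 0 ≤ 2 * K)
  rw [← s3, s2]
  have hgg : (fun v => y * z / v - max y (y * z / (r * v))) = g := hg.symm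
  rw [hgg]
  rw [s1] at s4
  have hL : 0 ≤ Real.log (z / y) := Real.log_nonneg (by rw [le_div_iff₀ hy0]; linarith)
  have h9 : 0 ≤ (z - y) * y ^ (3/5:ℝ) := mul_nonneg (by linarith) (by positivity)
  have h10 : 0 ≤ (y * z) ^ (3/5:ℝ) * (1 + Real.log (z / y)) := by positivity
  have h11 := mul_nonneg hK.le h9
  have h12 := mul_nonneg hK.le h10
  rw [abs_le] at s4 s5 ⊢
  constructor <;> nlinarith

end

section
open MeasureTheory Set Filter Topology

lemma A_bounds {L r : ℝ} (hr : 1 < r) (hL : Real.log r ≤ L) :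
    L * (1 - 1 / r) / 4 ≤ L * (1 - 1 / √r) - 1 + (Real.log (√r) + 1) / √r ∧
    L * (1 - 1 / √r) - 1 + (Real.log (√r) + 1) / √r ≤ L * (1 - 1 / r) - 1 + (Real.log r + 1) / r := by
  have hr0 : 0 < r := by linarith
  obtain ⟨s, hs⟩ : ∃ s, s = √r := ⟨_, rfl⟩
  have hs0 : 0 < s := hs ▸ Real.sqrt_pos.2 hr0
  have hrs : r = s * s := by rw [hs, Real.mul_self_sqrt hr0.le]
  have hs1 : 1 < s := by nlinarith
  rw [← hs]
  have hlog : Real.log r = 2 * Real.log s := by rw [hrs, Real.log_mul hs0.ne' hs0.ne']; ring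
  have h1 : 1 - 1 / s ≤ Real.log s := by
    have := Real.one_sub_inv_le_log_of_pos hs0
    simpa using this
  obtain ⟨t, ht⟩ : ∃ t, t = 1 / s := ⟨_, rfl⟩
  have ht0 : 0 < t := by rw [ht]; positivity
  have ht1 : t < 1 := by rw [ht, div_lt_one hs0]; exact hs1
  have e1 : 1 / r = t * t := by rw [ht, hrs]; field_simp
  have e2 : ∀ a : ℝ, a / r = a * (t * t) := fun a => by rw [← e1]; ring
  have e3 : ∀ a : ℝ, a / s = a * t := fun a => by rw [ht]; ring
  rw [hlog] at hL
  rw [e1, e2, ← ht, e3, hlog]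
  rw [← ht] at h1
  have hls : 0 < Real.log s := Real.log_pos hs1
  have ht1' : 0 < 1 - t := by linarith
  have hL0 : 0 < L := by linarith
  constructor
  · have h2 : (1 - t) * (L / 2) ≤ (1 - t) * (L - Real.log s) := by gcongr; linarith
    have h3 : L * (1 - t) * (1 + t) ≤ L * (1 - t) * 2 := by gcongr; linarith
    nlinarith
  · have h2 : t * (1 - t) * (2 * Real.log s) ≤ t * (1 - t) * L := by gcongr
    have h3 := mul_le_mul_of_nonneg_left h1 ht0.le
    nlinarith

set_option maxHeartbeats 800000 in
lemma key (K : ℝ) (hK : 0 < K) : ∃ C : ℝ, 0 < C ∧ ∀ y z r : ℝ, 2657 ≤ y → 1 < r → r * y ≤ z →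
    K * ((z - y) * y ^ (3/5:ℝ) + (y * z) ^ (3/5:ℝ) * (1 + Real.log (z / y))) ≤
     Real.log (z / y) / (2 * Real.log y + Real.log (z / y)) / 8 * (y * z) * (Real.log (z / y) * (1 - 1 / r)) +
     C * ((⌈Real.log (z / y) / Real.log r⌉₊ : ℝ) + 1) * (2 * Real.log y + Real.log (z / y)) * Real.log y * (y * z * y ^ (-(1/2):ℝ)) := by
  obtain ⟨D, hD⟩ : ∃ D : ℝ, D = 120 * K + 1 := ⟨_, rfl⟩
  have hD0 : 0 < D := by rw [hD]; positivity
  refine ⟨2 * K * D + 2 * K, by positivity, fun y z r hy hr hryz => ?_⟩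
  have hy0 : 0 < y := by linarith
  have hyz : y < z := by nlinarith
  have hz0 : 0 < z := by linarith
  obtain ⟨L, hL⟩ : ∃ L, L = Real.log (z / y) := ⟨_, rfl⟩
  obtain ⟨Y, hY⟩ : ∃ Y, Y = Real.log y := ⟨_, rfl⟩
  obtain ⟨m, hm⟩ : ∃ m : ℝ, m = (⌈L / Real.log r⌉₊ : ℝ) := ⟨_, rfl⟩
  obtain ⟨ρ, hρ⟩ : ∃ ρ, ρ = 1 - 1 / r := ⟨_, rfl⟩
  obtain ⟨lam, hlam⟩ : ∃ lam, lam = 1 - y / z := ⟨_, rfl⟩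
  have hlr : 0 < Real.log r := Real.log_pos hr
  have hrz : r ≤ z / y := by rw [le_div_iff₀ hy0]; exact hryz
  have hLr : Real.log r ≤ L := hL ▸ Real.log_le_log (by linarith) hrz
  have hL0 : 0 < L := by linarith
  have hY1 : 1 ≤ Y := by
    rw [hY, Real.le_log_iff_exp_le hy0]
    linarith [Real.exp_one_lt_d9]
  have hρ0 : 0 < ρ := by rw [hρ, sub_pos, div_lt_one (by linarith)]; exact hr
  have hρr : ρ ≤ Real.log r := by
    have := Real.one_sub_inv_le_log_of_pos (by linarith : 0 < r)
    rw [hρ]; simpa using this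
  have hlam0 : 0 < lam := by rw [hlam, sub_pos, div_lt_one hz0]; exact hyz
  have hlam1 : lam ≤ 1 := by rw [hlam]; have : 0 < y / z := by positivity
                             linarith
  have hlamL : lam ≤ L := by
    have := Real.one_sub_inv_le_log_of_pos (by positivity : 0 < z / y)
    rw [inv_div] at this
    rw [hlam, hL]; exact this
  have hm0 : 0 ≤ m := hm ▸ Nat.cast_nonneg _
  have hmL : L ≤ m * Real.log r := by
    have := Nat.le_ceil (L / Real.log r)
    rw [← hm, div_le_iff₀ hlr] at this
    exact this
  have hlm : lam ≤ 2 * ρ * (m + 1) := by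
    by_cases h2 : r ≤ 2
    · have h3 : Real.log r ≤ 2 * ρ := by
        have h4 := Real.log_le_sub_one_of_pos (by linarith : 0 < r)
        have h5 : r - 1 = r * ρ := by rw [hρ]; field_simp
        nlinarith
      nlinarith
    · push Not at h2
      have h3 : 1/2 ≤ ρ := by
        have : 1 / r ≤ 1 / 2 := by gcongr
        rw [hρ]; linarith
      nlinarith
  rw [← hL, ← hY, ← hm, ← hρ]
  obtain ⟨u, hu⟩ : ∃ u, u = y ^ (-(1/2):ℝ) := ⟨_, rfl⟩
  have hu0 : 0 < u := hu ▸ by positivity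
  rw [← hu]
  -- first term
  have e1 : (z - y) * y ^ (3/5:ℝ) = y * z * (lam * y ^ (-(2/5):ℝ)) := by
    have : y ^ (3/5:ℝ) = y * y ^ (-(2/5):ℝ) := by
      rw [show (3/5:ℝ) = 1 + -(2/5) by norm_num, Real.rpow_add hy0, Real.rpow_one]
    rw [this, hlam]; field_simp
  have hδ : lam / (3 * Y) ≤ L / (2 * Y + L) := by
    rw [div_le_div_iff₀ (by positivity) (by positivity)]
    nlinarith
  have t1 : K * (lam * y ^ (-(2/5):ℝ)) ≤ L / (2 * Y + L) / 8 * (L * ρ) + 2 * K * D * (m + 1) * u := by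
    have hpos : 0 ≤ L / (2 * Y + L) / 8 * (L * ρ) := by positivity
    have hpos2 : 0 ≤ 2 * K * D * (m + 1) * u := by positivity
    by_cases hc : K * y ^ (-(2/5):ℝ) ≤ L * ρ / (24 * Y)
    · have h1 := mul_le_mul_of_nonneg_left hc hlam0.le
      have h2 := mul_le_mul_of_nonneg_right hδ (by positivity : 0 ≤ L * ρ / 8)
      have h3 : lam * (L * ρ / (24 * Y)) = lam / (3 * Y) * (L * ρ / 8) := by field_simp; ring
      nlinarith
    · push Not at hc
      rw [div_lt_iff₀ (by positivity)] at hc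
      have h1 : ρ * ρ ≤ L * ρ := by gcongr; linarith
      have h2 : Y ≤ 5 * y ^ (1/5:ℝ) := by
        have := Real.log_le_rpow_div hy0.le (by norm_num : (0:ℝ) < 1/5)
        rw [hY]; linarith
      have h3 : y ^ (-(2/5):ℝ) * y ^ (1/5:ℝ) = y ^ (-(1/10):ℝ) * y ^ (-(1/10):ℝ) := by
        rw [← Real.rpow_add hy0, ← Real.rpow_add hy0]; norm_num
      obtain ⟨w, hw⟩ : ∃ w, w = y ^ (-(1/10):ℝ) := ⟨_, rfl⟩
      have hw0 : 0 < w := hw ▸ by positivity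
      rw [← hw] at h3
      have h4 : ρ * ρ ≤ (D * w) * (D * w) := by
        have h5 : K * y ^ (-(2/5):ℝ) * (24 * Y) ≤ K * y ^ (-(2/5):ℝ) * (24 * (5 * y ^ (1/5:ℝ))) := by gcongr
        have h6 : K * y ^ (-(2/5):ℝ) * (24 * (5 * y ^ (1/5:ℝ))) = 120 * K * (w * w) := by rw [← h3]; ring
        have h7 : 120 * K * (w * w) ≤ D * D * (w * w) := by
          refine mul_le_mul_of_nonneg_right ?_ (by positivity)
          rw [hD]; nlinarith
        linarith
      have h5 : ρ ≤ D * w := nonneg_le_nonneg_of_sq_le_sq (by positivity) h4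
      have h6 : w * y ^ (-(2/5):ℝ) = u := by
        rw [hw, hu, ← Real.rpow_add hy0]; norm_num
      have hy25 : 0 < y ^ (-(2/5):ℝ) := by positivity
      calc K * (lam * y ^ (-(2/5):ℝ)) ≤ K * ((2 * (D * w) * (m + 1)) * y ^ (-(2/5):ℝ)) := by
            have : lam ≤ 2 * (D * w) * (m + 1) := hlm.trans (by gcongr)
            gcongr
        _ = 2 * K * D * (m + 1) * (w * y ^ (-(2/5):ℝ)) := by ring
        _ ≤ _ := by rw [h6]; linarith
  have t2 : (y * z) ^ (3/5:ℝ) ≤ y * z * u := by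
    have hx1 : 1 ≤ y * z := by nlinarith
    have hx0 : 0 < y * z := by linarith
    calc (y * z) ^ (3/5:ℝ) ≤ (y * z) ^ (1 + -(1/4):ℝ) := Real.rpow_le_rpow_of_exponent_le hx1 (by norm_num)
      _ = y * z * (y * z) ^ (-(1/4):ℝ) := by rw [Real.rpow_add hx0, Real.rpow_one]
      _ ≤ y * z * u := by
        gcongr
        have : u = (y * y) ^ (-(1/4):ℝ) := by
          rw [hu, Real.mul_rpow hy0.le hy0.le, ← Real.rpow_add hy0]; norm_num
        rw [this]
        exact Real.rpow_le_rpow_of_nonpos (by positivity) (by gcongr) (by norm_num)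
  have hX : 0 < y * z := by positivity
  have hl1 : 1 ≤ (2 * Y + L) * Y := by nlinarith
  have s1 : K * ((z - y) * y ^ (3/5:ℝ)) ≤ y * z * (L / (2 * Y + L) / 8 * (L * ρ) + 2 * K * D * (m + 1) * u) := by
    rw [e1]
    have := mul_le_mul_of_nonneg_left t1 hX.le
    linarith
  have s2 : K * ((y * z) ^ (3/5:ℝ) * (1 + L)) ≤ 2 * K * (m + 1) * ((2 * Y + L) * Y) * (y * z * u) := by
    have h1 : 1 + L ≤ 2 * (1 * ((2 * Y + L) * Y)) := by nlinarith
    have h2 : 2 * (1 * ((2 * Y + L) * Y)) ≤ 2 * ((m + 1) * ((2 * Y + L) * Y)) := by gcongr; linarith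
    calc _ ≤ K * ((y * z * u) * (2 * ((m + 1) * ((2 * Y + L) * Y)))) := by
          gcongr; exact h1.trans h2
      _ = _ := by ring
  have s3 : y * z * (2 * K * D * (m + 1) * u) ≤ 2 * K * D * (m + 1) * ((2 * Y + L) * Y) * (y * z * u) := by
    have h : 0 ≤ 2 * K * D * (m + 1) * (y * z * u) := by positivity
    nlinarith [mul_le_mul_of_nonneg_left hl1 h]
  linarith

end

section
open MeasureTheory Set Filter Topology

lemma N_lower {y z r : ℝ} (hy : 1 ≤ y) (hyz : y < z) :
    WW y z r ≤ (RR y z r).card * ((2 * Real.log y + Real.log (z / y)) ^ 2 / 4) := by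
  have hy0 : 0 < y := by linarith
  have hz0 : 0 < z := by linarith
  rw [WW, ← nsmul_eq_mul]
  refine Finset.sum_le_card_nsmul _ _ _ fun pq hpq => ?_
  rw [RR, Finset.mem_filter, Finset.mem_product, mem_PP hy0.le hz0.le, mem_PP hy0.le hz0.le] at hpq
  obtain ⟨⟨h1, h2⟩, h3, h4⟩ := hpq
  have hp0 : (0:ℝ) < pq.1 := hy0.trans h1.2.1
  have hq0 : (0:ℝ) < pq.2 := hy0.trans h2.2.1
  have h5 : Real.log pq.1 + Real.log pq.2 ≤ 2 * Real.log y + Real.log (z / y) := by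
    rw [← Real.log_mul hp0.ne' hq0.ne']
    refine (Real.log_le_log (by positivity) h4).trans (le_of_eq ?_)
    rw [Real.log_mul hy0.ne' hz0.ne', Real.log_div hz0.ne' hy0.ne']; ring
  have h6 : 0 ≤ Real.log pq.1 := Real.log_natCast_nonneg _
  have h7 : 0 ≤ Real.log pq.2 := Real.log_natCast_nonneg _
  have h8 : (Real.log pq.1 + Real.log pq.2) ^ 2 ≤ (2 * Real.log y + Real.log (z / y)) ^ 2 := by gcongr
  nlinarith [sq_nonneg (Real.log pq.1 - Real.log pq.2)]

lemma N_upper {y z r : ℝ} (hy : 1 < y) (hr : 1 < r) (hryz : r * y ≤ z) :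
    (RR y z r).card * Real.log y ^ 2 ≤
      WW y z r - Real.log (z / y) / (2 * Real.log y + Real.log (z / y)) * WW y z (√r) := by
  have hy0 : 0 < y := by linarith
  have hyz : y < z := by nlinarith
  have hz0 : 0 < z := by linarith
  have hr0 : 0 < r := by linarith
  have hs0 : 0 < √r := Real.sqrt_pos.2 hr0
  have hs2 : √r * √r = r := Real.mul_self_sqrt hr0.le
  have hsr : √r ≤ r := by
    have : 1 ≤ √r := Real.one_le_sqrt.2 hr.le
    nlinarith
  have hsub : RR y z (√r) = (RR y z r).filter fun pq => y * z / √r < (pq.1:ℝ) * pq.2 := by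
    ext pq
    simp only [RR, Finset.mem_filter]
    constructor
    · rintro ⟨h1, h2, h3⟩
      refine ⟨⟨h1, lt_of_le_of_lt ?_ h2, h3⟩, h2⟩
      gcongr
    · rintro ⟨⟨h1, h2, h3⟩, h4⟩
      exact ⟨h1, h4, h3⟩
  have hW2 : WW y z (√r) = ∑ pq ∈ RR y z r, if y * z / √r < (pq.1:ℝ) * pq.2 then Real.log pq.1 * Real.log pq.2 else 0 := by
    rw [WW, hsub, Finset.sum_filter]
  rw [hW2, WW, Finset.mul_sum, ← Finset.sum_sub_distrib, ← nsmul_eq_mul]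
  refine Finset.card_nsmul_le_sum _ _ _ fun pq hpq => ?_
  rw [RR, Finset.mem_filter, Finset.mem_product, mem_PP hy0.le hz0.le, mem_PP hy0.le hz0.le] at hpq
  obtain ⟨⟨h1, h2⟩, h3, h4⟩ := hpq
  have hp0 : (0:ℝ) < pq.1 := hy0.trans h1.2.1
  have hq0 : (0:ℝ) < pq.2 := hy0.trans h2.2.1
  have hY : 0 < Real.log y := Real.log_pos hy
  have ha : Real.log y ≤ Real.log pq.1 := Real.log_le_log hy0 h1.2.1.le
  have hb : Real.log y ≤ Real.log pq.2 := Real.log_le_log hy0 h2.2.1.le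
  have hrz : r ≤ z / y := by rw [le_div_iff₀ hy0]; exact hryz
  have hLr : Real.log r ≤ Real.log (z / y) := Real.log_le_log hr0 hrz
  have hlr : 0 < Real.log r := Real.log_pos hr
  split_ifs with hc
  · have h5 := Real.log_le_log (by positivity) hc.le
    rw [Real.log_mul hp0.ne' hq0.ne', Real.log_div (by positivity) hs0.ne', Real.log_mul hy0.ne' hz0.ne',
      Real.log_sqrt hr0.le] at h5
    have h6 : Real.log z = Real.log y + Real.log (z / y) := by rw [Real.log_div hz0.ne' hy0.ne']; ring
    rw [h6] at h5
    clear hsub hW2 h6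
    generalize Real.log pq.1 = a at *
    generalize Real.log pq.2 = b at *
    generalize Real.log (z / y) = L at *
    generalize Real.log y = Y at *
    have hL0 : 0 < L := by linarith
    have h7 : Y ^ 2 + Y * L / 2 ≤ a * b := by nlinarith [mul_nonneg (sub_nonneg.2 ha) (sub_nonneg.2 hb)]
    have h8 : a * b - L / (2 * Y + L) * (a * b) = (2 * Y / (2 * Y + L)) * (a * b) := by field_simp; ring
    rw [h8]
    have h9 : Y ^ 2 = 2 * Y / (2 * Y + L) * (Y ^ 2 + Y * L / 2) := by field_simp
    rw [h9]
    gcongr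
  · nlinarith

lemma N_band (hRH : RiemannHypothesis) : ∃ C : ℝ, 0 < C ∧ ∀ y z r : ℝ, 2657 ≤ y → 1 < r → r * y ≤ z →
    0 ≤ Real.log (z / y) * (1 - 1 / r) - 1 + (Real.log r + 1) / r ∧
    y * z * (Real.log (z / y) * (1 - 1 / r) - 1 + (Real.log r + 1) / r) / (Real.log y + Real.log (z / y)) ^ 2
     - C * ((⌈Real.log (z / y) / Real.log r⌉₊ : ℝ) + 1) * ((2 * Real.log y + Real.log (z / y)) / Real.log y) * (y * z * y ^ (-(1/2):ℝ))
      ≤ (RR y z r).card ∧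
    (RR y z r).card ≤ y * z * (Real.log (z / y) * (1 - 1 / r) - 1 + (Real.log r + 1) / r) / Real.log y ^ 2
     + C * ((⌈Real.log (z / y) / Real.log r⌉₊ : ℝ) + 1) * ((2 * Real.log y + Real.log (z / y)) / Real.log y) * (y * z * y ^ (-(1/2):ℝ)) := by
  obtain ⟨K, hK, hW⟩ := W_bound hRH
  obtain ⟨C, hC, hkey⟩ := key K hK
  refine ⟨2 * C, by positivity, fun y z r hy hr hryz => ?_⟩
  have hy0 : 0 < y := by linarith
  have hyz : y < z := by nlinarith
  have hz0 : 0 < z := by linarith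
  have hr0 : 0 < r := by linarith
  have hs1 : 1 ≤ √r := Real.one_le_sqrt.2 hr.le
  have hs2 : √r * √r = r := Real.mul_self_sqrt hr0.le
  have hrz : r ≤ z / y := by rw [le_div_iff₀ hy0]; exact hryz
  have hLr : Real.log r ≤ Real.log (z / y) := Real.log_le_log hr0 hrz
  have hlr : 0 < Real.log r := Real.log_pos hr
  have hY : 0 < Real.log y := Real.log_pos (by linarith)
  have w1 := hW y z r (by linarith) hyz hr.le hryz
  have w2 := hW y z (√r) (by linarith) hyz hs1 (by nlinarith)
  have k := hkey y z r hy hr hryz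
  have a := A_bounds hr hLr
  have n1 := N_lower (r := r) (by linarith : 1 ≤ y) hyz
  have n2 := N_upper (by linarith : 1 < y) hr hryz
  have hρ : 0 < 1 - 1 / r := by rw [sub_pos, div_lt_one (by linarith)]; exact hr
  generalize K * ((z - y) * y ^ (3/5:ℝ) + (y * z) ^ (3/5:ℝ) * (1 + Real.log (z / y))) = Err at *
  generalize Real.log (z / y) * (1 - 1 / √r) - 1 + (Real.log (√r) + 1) / √r = As at *
  generalize Real.log (z / y) * (1 - 1 / r) - 1 + (Real.log r + 1) / r = A at *
  have hM : 0 < ((⌈Real.log (z / y) / Real.log r⌉₊ : ℝ) + 1) := by positivity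
  generalize ((⌈Real.log (z / y) / Real.log r⌉₊ : ℝ) + 1) = M at *
  have hu0 : 0 < y ^ (-(1/2):ℝ) := by positivity
  generalize y ^ (-(1/2):ℝ) = u at *
  generalize ((RR y z r).card : ℝ) = N at *
  generalize WW y z r = W at *
  generalize WW y z (√r) = Ws at *
  have hX : 0 < y * z := by positivity
  generalize y * z = X at *
  generalize Real.log (z / y) = L at *
  generalize Real.log y = Y at *
  generalize 1 - 1 / r = ρ at *
  have hL : 0 < L := by linarith
  obtain ⟨d, hd⟩ : ∃ d, d = L / (2 * Y + L) := ⟨_, rfl⟩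
  have hd0 : 0 < d := by rw [hd]; positivity
  have hd1 : d ≤ 1 := by rw [hd, div_le_one (by positivity)]; linarith
  rw [← hd] at k n2
  have hLρ : 0 < L * ρ := by positivity
  have hA : 0 ≤ A := by linarith
  have hdX : 0 ≤ d * X := by positivity
  have p1 : d * X * (L * ρ / 4) ≤ d * X * As := by gcongr; exact a.1
  have p2 : d * X * As ≤ d * X * A := by gcongr; exact a.2
  have hErr : 0 ≤ Err := (abs_nonneg _).trans w1
  have hdE : d * Err ≤ Err := mul_le_of_le_one_left hErr hd1
  rw [abs_le] at w1 w2
  have hdW : d * (X * As - Err) ≤ d * Ws := by gcongr; linarith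
  obtain ⟨T, hT⟩ : ∃ T, T = 2 * C * M * ((2 * Y + L) / Y) * (X * u) := ⟨_, rfl⟩
  have hTY : T * Y ^ 2 / 2 = C * M * (2 * Y + L) * Y * (X * u) := by rw [hT]; field_simp
  rw [← hTY] at k
  rw [← hT]
  refine ⟨hA, ?_, ?_⟩
  · obtain ⟨q, hq⟩ : ∃ q, q = Y + L / 2 := ⟨_, rfl⟩
    have hq0 : 0 < q := by rw [hq]; positivity
    have hqe : (2 * Y + L) ^ 2 / 4 = q ^ 2 := by rw [hq]; ring
    rw [hqe] at n1
    have hYL : 0 < Y + L := by linarith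
    have f1 : q ^ 2 / (Y + L) ^ 2 ≤ 1 - d / 2 := by
      have g1 : q / (Y + L) ≤ 1 := by rw [div_le_one hYL, hq]; linarith
      have g2 : q / (Y + L) ≤ 1 - d / 2 := by
        have : 1 - q / (Y + L) = L / (2 * (Y + L)) := by rw [hq]; field_simp; ring
        have h3 : d / 2 ≤ L / (2 * (Y + L)) := by
          rw [hd, div_div]; apply div_le_div_of_nonneg_left hL.le (by positivity) (by linarith)
        linarith
      have g3 : 0 < q / (Y + L) := by positivity
      rw [← div_pow]; nlinarith
    have hT0 : 0 ≤ T := by rw [hT]; positivity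
    have f2 : (X * A / (Y + L) ^ 2 - T) * q ^ 2 ≤ N * q ^ 2 := by
      have g1 : X * A / (Y + L) ^ 2 * q ^ 2 = X * A * (q ^ 2 / (Y + L) ^ 2) := by ring
      have g2 : X * A * (q ^ 2 / (Y + L) ^ 2) ≤ X * A * (1 - d / 2) := by gcongr
      have g3 : d * X * (L * ρ / 4) / 2 = d / 8 * X * (L * ρ) := by ring
      have g4 : T * Y ^ 2 ≤ T * q ^ 2 := by gcongr; rw [hq]; linarith
      have g5 : 0 ≤ T * Y ^ 2 := by positivity
      rw [sub_mul, g1]; linarith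
    exact le_of_mul_le_mul_right f2 (by positivity)
  · have f2 : N * Y ^ 2 ≤ (X * A / Y ^ 2 + T) * Y ^ 2 := by
      have g1 : X * A / Y ^ 2 * Y ^ 2 = X * A := by field_simp
      rw [add_mul, g1]
      linarith
    exact le_of_mul_le_mul_right f2 (by positivity)

end

lemma clamp {a b M N T : ℝ} (hab : a ≤ b) (hM : 0 ≤ M) (hT : 0 ≤ T) (h1 : a * M - T ≤ N) (h2 : N ≤ b * M + T) :
    ∃ t ∈ Set.Icc a b, |N - t * M| ≤ T := by
  by_cases ha : N ≤ a * M
  · exact ⟨a, ⟨le_rfl, hab⟩, by rw [abs_le]; constructor <;> linarith⟩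
  by_cases hb : b * M ≤ N
  · exact ⟨b, ⟨hab, le_rfl⟩, by rw [abs_le]; constructor <;> linarith⟩
  push Not at ha hb
  have hM0 : 0 < M := by
    rcases hM.lt_or_eq with h | h
    · exact h
    · rw [← h] at ha hb; linarith
  refine ⟨N / M, ⟨by rw [le_div_iff₀ hM0]; exact ha.le, by rw [div_le_iff₀ hM0]; exact hb.le⟩, ?_⟩
  rw [div_mul_cancel₀ _ hM0.ne']; simpa using hT

lemma NMAX_eq {r c₁ x : ℝ} (hx : 0 < x) : NMAX r c₁ x = (RR (x ^ c₁) (x ^ (1 - c₁)) r).card := by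
  have e : x ^ c₁ * x ^ (1 - c₁) = x := by rw [← Real.rpow_add hx]; simp
  have hy : 0 < x ^ c₁ := by positivity
  have hz : 0 < x ^ (1 - c₁) := by positivity
  rw [NMAX, ← Nat.card_eq_finsetCard]
  refine Nat.card_congr (Equiv.subtypeEquivRight fun pq => ?_)
  rw [RR, Finset.mem_filter, Finset.mem_product, mem_PP hy.le hz.le, mem_PP hy.le hz.le, e]
  tauto

theorem NMAX_asymptotics_band (hRH : RiemannHypothesis) :
    ∃ C : ℝ, 0 < C ∧ ∀ r x c₁ : ℝ, 1 < r → 1 < x → 0 < c₁ →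
      (2657 : ℝ) ≤ x ^ c₁ → c₁ ≤ 1 / 2 - Real.log r / (2 * Real.log x) →
      ∃ atil ∈ Set.Icc (1 / (4 * (1 - c₁) ^ 2)) (1 / (4 * c₁ ^ 2)),
        |(NMAX r c₁ x : ℝ)
            - atil * (4 * x / (Real.log x) ^ 2)
              * ((1 - 2 * c₁) * (1 - 1 / r) * Real.log x - 1 + (Real.log r + 1) / r)|
          ≤ C * ((⌈(1 - 2 * c₁) * Real.log x / Real.log r⌉₊ : ℝ) + 1) * c₁⁻¹
              * x ^ (1 - c₁ / 2) := by
  obtain ⟨C, hC, h⟩ := N_band hRH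
  refine ⟨C, hC, fun r x c hr hx hc hy hcr => ?_⟩
  have hx0 : 0 < x := by linarith
  have hl : 0 < Real.log x := Real.log_pos hx
  have hlr : 0 < Real.log r := Real.log_pos hr
  have e : x ^ c * x ^ (1 - c) = x := by rw [← Real.rpow_add hx0]; simp
  have hlogy : Real.log (x ^ c) = c * Real.log x := Real.log_rpow hx0 c
  have hyp : 0 < x ^ c := by positivity
  have hzp : 0 < x ^ (1 - c) := by positivity
  have hlogL : Real.log (x ^ (1 - c) / x ^ c) = (1 - 2 * c) * Real.log x := by
    rw [Real.log_div hzp.ne' hyp.ne', Real.log_rpow hx0, Real.log_rpow hx0]; ring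
  have hLr : Real.log r ≤ (1 - 2 * c) * Real.log x := by
    have h1 : Real.log r / (2 * Real.log x) ≤ 1 / 2 - c := by linarith
    rw [div_le_iff₀ (by positivity)] at h1
    linarith
  have hc2 : c < 1 / 2 := by
    have : 0 < Real.log r / (2 * Real.log x) := by positivity
    linarith
  have hryz : r * x ^ c ≤ x ^ (1 - c) := by
    rw [← le_div_iff₀ hyp, ← Real.log_le_log_iff (by linarith) (by positivity), hlogL]
    exact hLr
  obtain ⟨hA, h1, h2⟩ := h (x ^ c) (x ^ (1 - c)) r hy hr hryz
  rw [hlogL, hlogy, e, ← NMAX_eq hx0] at h1 h2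
  rw [hlogL] at hA
  have e1 : x * (x ^ c) ^ (-(1/2):ℝ) = x ^ (1 - c / 2) := by
    rw [← Real.rpow_mul hx0.le, show 1 - c / 2 = 1 + c * -(1/2) by ring, Real.rpow_add hx0, Real.rpow_one]
  have e2 : (2 * (c * Real.log x) + (1 - 2 * c) * Real.log x) / (c * Real.log x) = c⁻¹ := by
    field_simp; ring
  have e3 : (1 - 2 * c) * Real.log x * (1 - 1 / r) = (1 - 2 * c) * (1 - 1 / r) * Real.log x := by ring
  rw [e1, e2, e3] at h1 h2
  rw [e3] at hA
  obtain ⟨A, hAe⟩ : ∃ A, A = (1 - 2 * c) * (1 - 1 / r) * Real.log x - 1 + (Real.log r + 1) / r := ⟨_, rfl⟩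
  rw [← hAe] at h1 h2 hA ⊢
  have hc1 : 0 < 1 - c := by linarith
  have hab : 1 / (4 * (1 - c) ^ 2) ≤ 1 / (4 * c ^ 2) := by gcongr; linarith
  have hM : 0 ≤ 4 * x / Real.log x ^ 2 * A := by positivity
  have e4 : c * Real.log x + (1 - 2 * c) * Real.log x = (1 - c) * Real.log x := by ring
  rw [e4] at h1
  have f1 : 1 / (4 * (1 - c) ^ 2) * (4 * x / Real.log x ^ 2 * A) = x * A / ((1 - c) * Real.log x) ^ 2 := by
    field_simp
  have f2 : 1 / (4 * c ^ 2) * (4 * x / Real.log x ^ 2 * A) = x * A / (c * Real.log x) ^ 2 := by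
    field_simp
  rw [← f1] at h1
  rw [← f2] at h2
  obtain ⟨t, ht, hb⟩ := clamp hab hM (by positivity) h1 h2
  refine ⟨t, ht, ?_⟩
  rw [mul_assoc t]
  exact hb
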